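/- arXiv:1710.05117 — 6 statements merged into one kernel-verified Lean document; each statement's English description precedes it below -/
import Mathlib

section
/- Let T be a finite tree and let F be a finite nonempty family of subtrees of T (i.e., nonempty connected subgraphs of T). If every two subtrees in F share at least one vertex of T, then there is a vertex of T that belongs to all subtrees in F. -/
/-!
In a forest, a connected subgraph contains every path between two of its vertices, so its vertex
set is path-convex. In an arbitrary graph, three pairwise intersecting path-convex sets have a
common vertex: choose a vertex in each of the three pairwise intersections; these can be joined by
three paths through a common branch vertex, which then lies in all three sets. Path-convex sets are
closed under intersection, so a family is reduced one member at a time by intersecting all the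
others with that member.
-/

section PathConvexity

open SimpleGraph

variable {V : Type*} {G : SimpleGraph V}

theorem isPath_append_of_support_inter {u v w : V} {p : G.Walk u v} {q : G.Walk v w}
    (hp : p.IsPath) (hq : q.IsPath) (hpq : ∀ x ∈ p.support, x ∈ q.support → x = v) :
    (p.append q).IsPath := by
  have hv : v ∉ q.support.tail := by
    have hnodup := hq.support_nodup
    rw [← q.cons_tail_support] at hnodup
    exact (List.nodup_cons.1 hnodup).1
  rw [Walk.isPath_def, Walk.support_append, List.nodup_append']
  refine ⟨hp.support_nodup, hq.support_nodup.tail, fun x hxp hxq => ?_⟩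
  exact hv (hpq x hxp (List.mem_of_mem_tail hxq) ▸ hxq)

theorem exists_isPath_through_common_vertex {a b c : V} {p : G.Walk a b} {q : G.Walk c a}
    (hp : p.IsPath) (hq : q.IsPath) :
    ∃ m ∈ p.support, m ∈ q.support ∧ ∃ r : G.Walk c b, r.IsPath ∧ m ∈ r.support := by
  classical
  -- `m` is the first vertex of `q` that lies on `p`; the path `r` switches from `q` to `p` there.
  obtain ⟨m, hmp, hmq, hfirst⟩ :=
    q.exists_mem_support_forall_mem_support_imp_eq p.support.toFinset ⟨a, by simp⟩
  simp only [List.mem_toFinset] at hmp hfirst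
  refine ⟨m, hmp, hmq, (q.takeUntil m hmq).append (p.dropUntil m hmp), ?_, by simp⟩
  exact isPath_append_of_support_inter (hq.takeUntil hmq) (hp.dropUntil hmp)
    fun x hxq hxp => hfirst x (p.support_dropUntil_subset_support hmp hxp) hxq

/-- A set of vertices is path-convex if it contains all vertices of every path of `G` between two
of its members. It abstracts the property of subtrees behind the Helly property and, unlike
connectedness, passes to intersections in any graph. Members are also required to be reachable from
one another, since otherwise the union of two connected components would qualify. -/
structure IsPathConvex (G : SimpleGraph V) (s : Set V) : Prop where
  reachable : ∀ ⦃u⦄, u ∈ s → ∀ ⦃v⦄, v ∈ s → G.Reachable u v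
  mem_of_mem_support : ∀ ⦃u⦄, u ∈ s → ∀ ⦃v⦄, v ∈ s →
    ∀ p : G.Walk u v, p.IsPath → ∀ x ∈ p.support, x ∈ s

namespace IsPathConvex

theorem inter {s t : Set V} (hs : IsPathConvex G s) (ht : IsPathConvex G t) :
    IsPathConvex G (s ∩ t) where
  reachable _ hu _ hv := hs.reachable hu.1 hv.1
  mem_of_mem_support _ hu _ hv p hp x hx :=
    ⟨hs.mem_of_mem_support hu.1 hv.1 p hp x hx, ht.mem_of_mem_support hu.2 hv.2 p hp x hx⟩

theorem inter_inter_nonempty {s t u : Set V} (hs : IsPathConvex G s) (ht : IsPathConvex G t)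
    (hu : IsPathConvex G u) (hst : (s ∩ t).Nonempty) (htu : (t ∩ u).Nonempty)
    (hsu : (s ∩ u).Nonempty) : (s ∩ t ∩ u).Nonempty := by
  obtain ⟨a, has, hat⟩ := hst
  obtain ⟨b, hbt, hbu⟩ := htu
  obtain ⟨c, hcs, hcu⟩ := hsu
  obtain ⟨p, hp⟩ := (ht.reachable hat hbt).exists_isPath
  obtain ⟨q, hq⟩ := (hs.reachable hcs has).exists_isPath
  obtain ⟨m, hmp, hmq, r, hr, hmr⟩ := exists_isPath_through_common_vertex hp hq
  have hms : m ∈ s := hs.mem_of_mem_support hcs has q hq m hmq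
  have hmt : m ∈ t := ht.mem_of_mem_support hat hbt p hp m hmp
  have hmu : m ∈ u := hu.mem_of_mem_support hcu hbu r hr m hmr
  exact ⟨m, ⟨hms, hmt⟩, hmu⟩

theorem biInter_nonempty {ι : Type*} {I : Finset ι} (hI : I.Nonempty) {s : ι → Set V}
    (hs : ∀ i ∈ I, IsPathConvex G (s i)) (hpair : ∀ i ∈ I, ∀ j ∈ I, (s i ∩ s j).Nonempty) :
    (⋂ i ∈ I, s i).Nonempty := by
  induction hI using Finset.Nonempty.cons_induction generalizing s with
  | singleton i => simpa using hpair i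
  | cons k I _ hI ih =>
    simp only [Finset.forall_mem_cons] at hs hpair
    obtain ⟨hk, hs⟩ := hs
    have htriple : ∀ i ∈ I, ∀ j ∈ I, ((s i ∩ s k) ∩ (s j ∩ s k)).Nonempty := fun i hi j hj => by
      rw [← Set.inter_inter_distrib_right]
      exact (hs i hi).inter_inter_nonempty (hs j hj) hk ((hpair.2 i hi).2 j hj)
        (hpair.2 j hj).1 (hpair.2 i hi).1
    obtain ⟨x, hx⟩ := ih (fun i hi => (hs i hi).inter hk) htriple
    simp only [Set.mem_iInter, Set.mem_inter_iff] at hx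
    obtain ⟨i, hi⟩ := hI
    exact ⟨x, by simpa using ⟨(hx i hi).2, fun j hj => (hx j hj).1⟩⟩

end IsPathConvex

theorem isPathConvex_verts_of_preconnected (hG : G.IsAcyclic) {H : G.Subgraph}
    (hH : H.Preconnected) : IsPathConvex G H.verts where
  reachable u hu v hv := (hH ⟨u, hu⟩ ⟨v, hv⟩).map H.hom
  mem_of_mem_support u hu v hv p hp x hx := by
    classical
    obtain ⟨q, hqH⟩ := H.preconnected_iff_forall_exists_walk_subgraph.1 hH hu hv
    have hpq : p = q.bypass :=
      congrArg Subtype.val ((hG.subsingleton_path u v).elim ⟨p, hp⟩ q.toPath)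
    have hxq : x ∈ q.support := q.support_bypass_subset_support (hpq ▸ hx)
    exact hqH.1 (q.mem_verts_toSubgraph.2 hxq)

end PathConvexity

theorem helly_subtrees_general {V : Type*} {G : SimpleGraph V} (hG : G.IsAcyclic)
    {F : Set G.Subgraph} (hFfin : F.Finite) (hFne : F.Nonempty)
    (hconn : ∀ H ∈ F, H.Connected)
    (hpair : ∀ H ∈ F, ∀ K ∈ F, (H.verts ∩ K.verts).Nonempty) :
    (⋂ H ∈ F, H.verts).Nonempty := by
  lift F to Finset G.Subgraph using hFfin
  exact IsPathConvex.biInter_nonempty hFne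
    (fun H hH => isPathConvex_verts_of_preconnected hG (hconn H hH).preconnected) hpair

/-- **Helly property for subtrees of a tree.**
Let `T` be a finite tree and `F` a finite nonempty family of subtrees of `T`
(nonempty connected subgraphs of `T`). If every two subtrees in `F` share at
least one vertex of `T`, then some vertex of `T` belongs to all subtrees in `F`. -/
theorem helly_subtrees {V : Type} [Fintype V] (T : SimpleGraph V) (hT : T.IsTree)
    (F : Set T.Subgraph) (hFfin : F.Finite) (hFne : F.Nonempty)
    (hconn : ∀ H ∈ F, H.Connected)
    (hpair : ∀ H ∈ F, ∀ K ∈ F, (H.verts ∩ K.verts).Nonempty) :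
    (⋂ H ∈ F, H.verts).Nonempty :=
  helly_subtrees_general hT.isAcyclic hFfin hFne hconn hpair
end

section
/- For every finite simple graph G, the function mm_G : 2^{V(G)} → ℤ is submodular: for all A, B ⊆ V(G), mm_G(A) + mm_G(B) ≥ mm_G(A ∪ B) + mm_G(A ∩ B). -/
/-- `mm G A` is the maximum size (number of edges) of a matching in `G` all of whose
edges have one endpoint in `A` and the other endpoint in `V(G) \ A`. -/
noncomputable def mm {α : Type} [Fintype α] (G : SimpleGraph α) (A : Set α) : ℕ :=
  sSup {n : ℕ | ∃ M : G.Subgraph, M.IsMatching ∧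
    (∀ u v : α, M.Adj u v → (u ∈ A ↔ v ∉ A)) ∧ M.edgeSet.ncard = n}

/-!
By König's theorem `mm G A` is the minimum size of a vertex cover of the bipartite graph formed by
the edges of `G` between `A` and its complement. Minimum covers `C` for `A` and `D` for `B` can be
uncrossed: `(C ∩ D) ∪ (C \ B) ∪ (D \ A)` covers the edges leaving `A ∪ B`,
`(C ∩ D) ∪ (C ∩ B) ∪ (D ∩ A)` covers the edges leaving `A ∩ B`, and these two sets have union
`C ∪ D` and intersection `C ∩ D`.

König's theorem is obtained by applying Hall's theorem to the edges of a bipartite graph between a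
minimum vertex cover `C` and its complement. For an independent `S ⊆ C`, replacing `S` in `C` by
the neighbours of `S` outside `C` gives another cover, so `S` has at least `|S|` such neighbours.
A general `S ⊆ C` is split along the bipartition, and the two parts have disjoint neighbourhoods.
-/

section KonigTheorem

open SimpleGraph

variable {V : Type*} {G : SimpleGraph V} {C S s t : Set V}

theorem edgeSet_map_ofLE {H : SimpleGraph V} (hHG : H ≤ G) (M : H.Subgraph) :
    (M.map (Hom.ofLE hHG)).edgeSet = M.edgeSet := by
  simp

theorem encard_edgeSet_le_of_isVertexCover {M : G.Subgraph} (hM : M.IsMatching)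
    (hC : M.spanningCoe.IsVertexCover C) : M.edgeSet.encard ≤ C.encard := by
  have edgeSet_subset :
      M.edgeSet ⊆ (fun v ↦ (hM.toEdge v : Sym2 V)) '' ((↑) ⁻¹' C : Set M.verts) := by
    refine Sym2.ind fun u v (huv : M.Adj u v) ↦ ?_
    rcases hC huv with hu | hv
    · exact ⟨⟨u, huv.fst_mem⟩, hu, congrArg _ (hM.toEdge_eq_of_adj huv)⟩
    · exact ⟨⟨v, huv.snd_mem⟩, hv,
        (congrArg _ (hM.toEdge_eq_of_adj huv.symm)).trans Sym2.eq_swap⟩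
  calc M.edgeSet.encard ≤ ((↑) ⁻¹' C : Set M.verts).encard :=
        (Set.encard_le_encard edgeSet_subset).trans (Set.encard_image_le _ _)
    _ ≤ C.encard := Set.encard_preimage_val_le_encard_right _ _

theorem encard_edgeSet_le_vertexCoverNum {M : G.Subgraph} (hM : M.IsMatching) :
    M.edgeSet.encard ≤ M.spanningCoe.vertexCoverNum :=
  le_iInf₂ fun _ hC ↦ encard_edgeSet_le_of_isVertexCover hM hC

theorem encard_le_encard_edgeSet_of_isIndepSet {M : G.Subgraph} (hM : M.IsMatching)
    (hS : G.IsIndepSet S) (hSM : S ⊆ M.verts) : S.encard ≤ M.edgeSet.encard := by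
  have exists_partner : ∀ v ∈ S, ∃ w, M.Adj v w := fun v hv ↦ (hM (hSM hv)).exists
  choose! partner hpartner using exists_partner
  refine Set.encard_le_encard_of_injOn (f := fun v ↦ s(v, partner v)) hpartner
    fun u hu v hv huv ↦ ?_
  rcases Sym2.eq_iff.mp huv with ⟨h, -⟩ | ⟨h, -⟩
  · exact h
  · by_contra hne
    exact hS hv hu (Ne.symm hne) (h ▸ (hpartner v hv).adj_sub)

theorem isVertexCover_sdiff_union_neighborSet_between (hC : G.IsVertexCover C)
    (hS : G.IsIndepSet S) :
    G.IsVertexCover (C \ S ∪ ⋃ v ∈ S, (G.between C Cᶜ).neighborSet v) := by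
  intro u v huv
  have mem_cover : u ∈ C ∨ v ∈ C := hC huv
  have not_both_mem : ¬(u ∈ S ∧ v ∈ S) := fun h ↦ hS h.1 h.2 huv.ne huv
  simp only [Set.mem_union, Set.mem_sdiff, Set.mem_iUnion, mem_neighborSet, between_adj,
    Set.mem_compl_iff]
  grind [huv.symm]

theorem encard_le_encard_neighborSet_between_of_isIndepSet (hC : G.IsVertexCover C)
    (hmin : C.encard = G.vertexCoverNum) (hfin : C.Finite) (hSC : S ⊆ C) (hS : G.IsIndepSet S) :
    S.encard ≤ (⋃ v ∈ S, (G.between C Cᶜ).neighborSet v).encard := by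
  refine (ENat.add_le_add_iff_left (hfin.sdiff (t := S)).encard_lt_top.ne).mp ?_
  calc (C \ S).encard + S.encard = G.vertexCoverNum := by
        rw [Set.encard_sdiff_add_encard_of_subset hSC, hmin]
    _ ≤ (C \ S ∪ ⋃ v ∈ S, (G.between C Cᶜ).neighborSet v).encard :=
        (isVertexCover_sdiff_union_neighborSet_between hC hS).vertexCoverNum_le
    _ ≤ _ := Set.encard_union_le _ _

theorem encard_le_encard_neighborSet_between (hG : G.IsBipartiteWith s t)
    (hC : G.IsVertexCover C) (hmin : C.encard = G.vertexCoverNum) (hfin : C.Finite)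
    (hSC : S ⊆ C) : S.encard ≤ (⋃ v ∈ S, (G.between C Cᶜ).neighborSet v).encard := by
  let N (T : Set V) : Set V := ⋃ v ∈ T, (G.between C Cᶜ).neighborSet v
  have mem_s_iff {u v : V} (huv : G.Adj u v) : u ∈ s ↔ v ∉ s := by
    have := hG.mem_of_adj huv
    have := hG.disjoint.notMem_of_mem_left (a := u)
    have := hG.disjoint.notMem_of_mem_left (a := v)
    tauto
  have indep_inter : G.IsIndepSet (S ∩ s) := fun u hu v hv _ huv ↦
    (mem_s_iff huv).mp hu.2 hv.2
  have indep_sdiff : G.IsIndepSet (S \ s) := fun u hu v hv _ huv ↦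
    hu.2 ((mem_s_iff huv).mpr hv.2)
  have disjoint_neighbors : Disjoint (N (S ∩ s)) (N (S \ s)) := by
    simp only [N, Set.disjoint_left, Set.mem_iUnion, mem_neighborSet]
    rintro w ⟨u, hu, huw⟩ ⟨v, hv, hvw⟩
    exact hv.2 ((mem_s_iff hvw.1).mpr ((mem_s_iff huw.1).mp hu.2))
  calc S.encard = (S \ s).encard + (S ∩ s).encard := (Set.encard_sdiff_add_encard_inter S s).symm
    _ ≤ (N (S \ s)).encard + (N (S ∩ s)).encard := add_le_add
        (encard_le_encard_neighborSet_between_of_isIndepSet hC hmin hfin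
          (Set.sdiff_subset.trans hSC) indep_sdiff)
        (encard_le_encard_neighborSet_between_of_isIndepSet hC hmin hfin
          (Set.inter_subset_left.trans hSC) indep_inter)
    _ = (N (S \ s) ∪ N (S ∩ s)).encard := (Set.encard_union_eq disjoint_neighbors.symm).symm
    _ = (N S).encard := by rw [← Set.biUnion_union, Set.sdiff_union_inter]

/-- **König's theorem** -/
theorem exists_isMatching_encard_edgeSet_eq_vertexCoverNum [Finite V]
    (hG : G.IsBipartiteWith s t) :
    ∃ M : G.Subgraph, M.IsMatching ∧ M.edgeSet.encard = G.vertexCoverNum := by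
  classical
  have := Fintype.ofFinite V
  obtain ⟨C, hmin, hC⟩ := G.vertexCoverNum_exists
  have hall_condition : ∀ S ⊆ C,
      S.ncard ≤ (⋃ v ∈ S, (G.between C Cᶜ).neighborSet v).ncard := fun S hSC ↦
    ENat.toNat_le_toNat (encard_le_encard_neighborSet_between hG hC hmin C.toFinite hSC)
      (Set.toFinite _).encard_lt_top.ne
  obtain ⟨M, hCM, hM⟩ := exists_isMatching_of_forall_ncard_le
    (G.between_isBipartiteWith disjoint_compl_right) hall_condition
  have indep : (G.between C Cᶜ).IsIndepSet C := fun u hu v hv _ huv ↦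
    huv.2.elim (fun h ↦ h.2 hv) (fun h ↦ h.1 hu)
  have hM' := hM.map_ofLE between_le
  refine ⟨_, hM', le_antisymm ?_ ?_⟩
  · exact (encard_edgeSet_le_vertexCoverNum hM').trans
      (vertexCoverNum_mono (Subgraph.spanningCoe_le _))
  · rw [edgeSet_map_ofLE, ← hmin]
    exact encard_le_encard_edgeSet_of_isIndepSet hM indep hCM

end KonigTheorem

section Cut

open SimpleGraph

variable {V : Type*} {G : SimpleGraph V} {A B C D : Set V}

/-- The bipartite graph formed by the edges of `G` with exactly one endpoint in `A`; its matchings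
are the ones that `mm G A` maximises over. -/
abbrev cutGraph (G : SimpleGraph V) (A : Set V) : SimpleGraph V :=
  G.between A Aᶜ

theorem cutGraph_adj_iff {u v : V} : (cutGraph G A).Adj u v ↔ G.Adj u v ∧ (u ∈ A ↔ v ∉ A) := by
  rw [between_adj, Set.mem_compl_iff, Set.mem_compl_iff]
  tauto

theorem isVertexCover_cutGraph_union (hC : (cutGraph G A).IsVertexCover C)
    (hD : (cutGraph G B).IsVertexCover D) :
    (cutGraph G (A ∪ B)).IsVertexCover (C ∩ D ∪ C \ B ∪ D \ A) := by
  intro u v huv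
  have := @hC u v
  have := @hD u v
  grind [cutGraph_adj_iff]

theorem isVertexCover_cutGraph_inter (hC : (cutGraph G A).IsVertexCover C)
    (hD : (cutGraph G B).IsVertexCover D) :
    (cutGraph G (A ∩ B)).IsVertexCover (C ∩ D ∪ C ∩ B ∪ D ∩ A) := by
  intro u v huv
  have := @hC u v
  have := @hD u v
  grind [cutGraph_adj_iff]

theorem encard_uncross_add_encard_uncross (A B C D : Set V) :
    (C ∩ D ∪ C \ B ∪ D \ A).encard + (C ∩ D ∪ C ∩ B ∪ D ∩ A).encard = C.encard + D.encard := by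
  have union_eq : (C ∩ D ∪ C \ B ∪ D \ A) ∪ (C ∩ D ∪ C ∩ B ∪ D ∩ A) = C ∪ D := by grind
  have inter_eq : (C ∩ D ∪ C \ B ∪ D \ A) ∩ (C ∩ D ∪ C ∩ B ∪ D ∩ A) = C ∩ D := by grind
  rw [← Set.encard_union_add_encard_inter, union_eq, inter_eq, Set.encard_union_add_encard_inter]

theorem vertexCoverNum_cutGraph_submodular (G : SimpleGraph V) (A B : Set V) :
    (cutGraph G (A ∪ B)).vertexCoverNum + (cutGraph G (A ∩ B)).vertexCoverNum ≤
      (cutGraph G A).vertexCoverNum + (cutGraph G B).vertexCoverNum := by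
  obtain ⟨C, hCmin, hC⟩ := (cutGraph G A).vertexCoverNum_exists
  obtain ⟨D, hDmin, hD⟩ := (cutGraph G B).vertexCoverNum_exists
  rw [← hCmin, ← hDmin, ← encard_uncross_add_encard_uncross A B C D]
  exact add_le_add (isVertexCover_cutGraph_union hC hD).vertexCoverNum_le
    (isVertexCover_cutGraph_inter hC hD).vertexCoverNum_le

end Cut

open SimpleGraph in
theorem natCast_mm_eq_vertexCoverNum_cutGraph {α : Type} [Fintype α] (G : SimpleGraph α)
    (A : Set α) : (mm G A : ℕ∞) = (cutGraph G A).vertexCoverNum := by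
  rw [← ENat.natCast_toNat vertexCoverNum_ne_top_of_finite, Nat.cast_inj]
  refine IsGreatest.csSup_eq ⟨?_, ?_⟩
  · obtain ⟨M, hM, hcard⟩ := exists_isMatching_encard_edgeSet_eq_vertexCoverNum
      (G.between_isBipartiteWith (disjoint_compl_right (a := A)))
    refine ⟨M.map (Hom.ofLE between_le), hM.map_ofLE between_le, fun u v huv ↦ ?_, ?_⟩
    · have hadj : M.Adj u v := by simpa using huv
      exact (cutGraph_adj_iff.mp hadj.adj_sub).2
    · rw [edgeSet_map_ofLE, Set.ncard, hcard]
  · rintro _ ⟨M, hM, hA, rfl⟩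
    have hcut : M.spanningCoe ≤ cutGraph G A := fun u v huv ↦
      cutGraph_adj_iff.mpr ⟨huv.adj_sub, hA u v huv⟩
    exact ENat.toNat_le_toNat
      ((encard_edgeSet_le_vertexCoverNum hM).trans (vertexCoverNum_mono hcut))
      vertexCoverNum_ne_top_of_finite

/-- For every finite simple graph `G`, the function `mm G` is submodular:
for all `A, B ⊆ V(G)`, `mm G A + mm G B ≥ mm G (A ∪ B) + mm G (A ∩ B)`. -/
theorem mm_submodular {α : Type} [Fintype α] (G : SimpleGraph α) (A B : Set α) :
    mm G (A ∪ B) + mm G (A ∩ B) ≤ mm G A + mm G B := by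
  have h := vertexCoverNum_cutGraph_submodular G A B
  simp only [← natCast_mm_eq_vertexCoverNum_cutGraph] at h
  exact_mod_cast h
end

section
/- A finite simple graph G with at least one edge satisfies mmw(G) ≤ k if and only if there exist a finite ternary tree T and nontrivial subtrees T_u of T for all vertices u ∈ V(G) such that (1) if uv ∈ E(G) then the subtrees T_u and T_v have at least one vertex of T in common, and (2) every edge of T belongs to at most k of the subtrees T_u. -/
/-- The maximum matching width `mmw G`: the minimum over all branch-decompositions
`(T, L)` over `V(G)` — `T` a finite ternary tree (all degrees 1 or 3) together with a
bijection `L` between `V(G)` and the leaves of `T` — of the maximum, over the edges of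
`T`, of `mm G` applied to the part of the partition of `V(G)` induced by that edge
(the set of vertices of `G` whose leaves lie on one side of the deleted edge). -/
noncomputable def mmw {α : Type} [Fintype α] (G : SimpleGraph α) : ℕ :=
  sInf {k : ℕ | ∃ (V : Type) (_ : Fintype V) (T : SimpleGraph V), T.IsTree ∧
    (∀ v : V, (T.neighborSet v).ncard = 1 ∨ (T.neighborSet v).ncard = 3) ∧
    ∃ L : α ≃ {v : V // (T.neighborSet v).ncard = 1},
      ∀ a b : V, T.Adj a b →
        mm G {x : α | (T.deleteEdges {s(a, b)}).Reachable (L x : V) a} ≤ k}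

/-!
A branch-decomposition is turned into subtrees by choosing for every cut of `T` a minimum vertex
cover of the crossing edges; by Kőnig's theorem it has at most `k` elements, and the subtree of `u`
consists of the edges of `T` whose cover contains `u`. For these edges to form a subtree reaching
the leaf of `u`, the covers have to be compatible: all cuts are represented by their part avoiding a
fixed vertex, each cover is chosen to have as many elements as possible in that part, and
uncrossing two such covers of nested cuts shows that a cover loses `u` only in the direction away
from its leaf. The subtrees of adjacent vertices `u` and `v` meet because on the path between
their leaves every edge belongs to one of the two.

Conversely, choose an edge of `T` in each subtree and let every vertex of `G` hang off its edge. An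
edge `ab` of `T` then only determines a range of vertex sets, from the vertices hanging strictly on
the side of `a` to those together with the vertices hanging off `ab` itself. For every set in this
range the subtrees containing `ab` cover the cut, so the vertices may be inserted one after the
other, and the resulting binary hierarchy of vertex sets is a branch-decomposition.
-/

open SimpleGraph

/-! ### The two sides of a tree edge -/

section EdgeSide

variable {V : Type*} {T : SimpleGraph V} {a b c x y : V} {W : Set V}

theorem mem_of_reachable_of_adj_closed (hW : ∀ x y, T.Adj x y → x ∈ W → y ∈ W)
    (hxy : T.Reachable x y) (hx : x ∈ W) : y ∈ W := by
  obtain ⟨p⟩ := hxy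
  induction p with
  | nil => exact hx
  | cons hadj _ ih => exact ih (hW _ _ hadj hx)

/-- The side of `a` after deleting the edge `ab`: all vertices still connected to `a`. Each cut
of a branch-decomposition is the preimage of such a set under the labelling of the leaves. -/
def edgeSide (T : SimpleGraph V) (a b : V) : Set V :=
  {w | (T.deleteEdges {s(a, b)}).Reachable w a}

theorem left_mem_edgeSide (T : SimpleGraph V) (a b : V) : a ∈ edgeSide T a b :=
  Reachable.refl a

theorem mem_edgeSide_of_adj (h : T.Adj x y) (hne : s(x, y) ≠ s(a, b))
    (hx : x ∈ edgeSide T a b) : y ∈ edgeSide T a b :=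
  (deleteEdges_adj.2 ⟨h, hne⟩).reachable.symm.trans hx

theorem edgeSide_subset (ha : a ∈ W)
    (hW : ∀ x y, T.Adj x y → s(x, y) ≠ s(a, b) → x ∈ W → y ∈ W) : edgeSide T a b ⊆ W :=
  fun _ hw ↦ mem_of_reachable_of_adj_closed
    (fun x y hxy ↦ hW x y (deleteEdges_adj.1 hxy).1 (deleteEdges_adj.1 hxy).2) hw.symm ha

theorem isAcyclic_iff_right_notMem_edgeSide :
    T.IsAcyclic ↔ ∀ a b, T.Adj a b → b ∉ edgeSide T a b := by
  simp only [isAcyclic_iff_forall_adj_isBridge, isBridge_iff, edgeSide, Set.mem_ofPred_eq,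
    reachable_comm]

theorem right_notMem_edgeSide_comm : b ∉ edgeSide T a b ↔ a ∉ edgeSide T b a := by
  simp only [edgeSide, Set.mem_ofPred_eq, reachable_comm, Sym2.eq_swap]

theorem right_notMem_edgeSide (hT : T.IsAcyclic) (hab : T.Adj a b) : b ∉ edgeSide T a b :=
  isAcyclic_iff_right_notMem_edgeSide.1 hT a b hab

theorem compl_edgeSide (hT : T.IsTree) (hab : T.Adj a b) :
    (edgeSide T a b)ᶜ = edgeSide T b a := by
  apply Set.Subset.antisymm
  · rw [Set.compl_subset_iff_union, Set.eq_univ_iff_forall]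
    refine fun x ↦ mem_of_reachable_of_adj_closed (fun y z hyz hy ↦ ?_)
      (hT.connected.preconnected a x) (.inl (left_mem_edgeSide T a b))
    by_cases heq : s(y, z) = s(a, b)
    · rcases Sym2.eq_iff.1 heq with ⟨-, rfl⟩ | ⟨-, rfl⟩
      exacts [.inr (left_mem_edgeSide T _ _), .inl (left_mem_edgeSide T _ _)]
    · exact hy.imp (mem_edgeSide_of_adj hyz heq)
        (mem_edgeSide_of_adj hyz (Sym2.eq_swap (a := a) ▸ heq))
  · refine edgeSide_subset (right_notMem_edgeSide hT.isAcyclic hab) fun x y hxy hne hx hy ↦ hx ?_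
    exact mem_edgeSide_of_adj hxy.symm (by rwa [Sym2.eq_swap, Sym2.eq_swap (a := a)]) hy

theorem edgeSide_subset_edgeSide (hT : T.IsAcyclic) (hca : T.Adj c a) (hcb : c ≠ b) :
    edgeSide T c a ⊆ edgeSide T a b := by
  have hne : s(a, c) ≠ s(a, b) := fun h ↦ hcb (Sym2.congr_right.1 h)
  suffices edgeSide T c a ⊆ edgeSide T c a ∩ edgeSide T a b from
    this.trans Set.inter_subset_right
  refine edgeSide_subset ⟨left_mem_edgeSide T c a,
    mem_edgeSide_of_adj hca.symm hne (left_mem_edgeSide T a b)⟩ ?_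
  rintro x y hxy hne' ⟨hxc, hxa⟩
  refine ⟨mem_edgeSide_of_adj hxy hne' hxc, mem_edgeSide_of_adj hxy (fun heq ↦ ?_) hxa⟩
  have hac : a ∉ edgeSide T c a := right_notMem_edgeSide hT hca
  rcases Sym2.eq_iff.1 heq with ⟨rfl, -⟩ | ⟨-, rfl⟩
  · exact hac hxc
  · exact hac (mem_edgeSide_of_adj hxy hne' hxc)

theorem exists_adj_mem_edgeSide (hT : T.Connected) (hx : x ≠ a) :
    ∃ c, T.Adj c a ∧ x ∈ edgeSide T c a := by
  suffices x ∈ {y | y ≠ a → ∃ c, T.Adj c a ∧ y ∈ edgeSide T c a} from this hx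
  refine mem_of_reachable_of_adj_closed (fun y z hyz hy hz ↦ ?_) (hT.preconnected a x)
    fun h ↦ absurd rfl h
  obtain rfl | hya := eq_or_ne y a
  · exact ⟨z, hyz.symm, left_mem_edgeSide T z y⟩
  · obtain ⟨c, hca, hyc⟩ := hy hya
    refine ⟨c, hca, mem_edgeSide_of_adj hyz (fun heq ↦ ?_) hyc⟩
    rcases Sym2.eq_iff.1 heq with ⟨-, rfl⟩ | ⟨rfl, -⟩
    exacts [hz rfl, hya rfl]

theorem exists_adj_ne_mem_edgeSide (hT : T.IsTree) (hab : T.Adj a b) (hx : x ∈ edgeSide T a b)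
    (hxa : x ≠ a) : ∃ c, T.Adj c a ∧ c ≠ b ∧ x ∈ edgeSide T c a := by
  obtain ⟨c, hca, hxc⟩ := exists_adj_mem_edgeSide hT.connected hxa
  refine ⟨c, hca, ?_, hxc⟩
  rintro rfl
  rw [← compl_edgeSide hT hab] at hxc
  exact hxc hx

theorem edgeSide_induction [Finite V] (hT : T.IsAcyclic) {P : V → V → Prop}
    (step : ∀ a b, T.Adj a b → (∀ c, T.Adj c a → c ≠ b → P c a) → P a b)
    (hab : T.Adj a b) : P a b := by
  induction hn : (edgeSide T a b).ncard using Nat.strong_induction_on generalizing a b with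
  | _ n ih =>
    refine step a b hab fun c hca hcb ↦ ih _ ?_ hca rfl
    rw [← hn]
    refine Set.ncard_lt_ncard ⟨edgeSide_subset_edgeSide hT hca hcb, fun h ↦ ?_⟩
    exact right_notMem_edgeSide hT hca (h (left_mem_edgeSide T a b))

end EdgeSide

/-! ### Joining two trees by an edge -/

section AttachedTree

variable {V V' : Type*} {T : SimpleGraph V} {T' : SimpleGraph V'} {r : V} {a b : V}

theorem edgeSide_map_of_notMem (φ : T ↪g T')
    (hφ : ∀ x z, T'.Adj (φ x) z → z ∉ Set.range φ → x = r) (hr : r ∉ edgeSide T a b) :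
    edgeSide T' (φ a) (φ b) = φ '' edgeSide T a b := by
  have hne {x y : V} : s(φ x, φ y) ≠ s(φ a, φ b) ↔ s(x, y) ≠ s(a, b) := by
    simp [φ.injective.eq_iff]
  apply Set.Subset.antisymm
  · refine edgeSide_subset ⟨a, left_mem_edgeSide T a b, rfl⟩ ?_
    rintro _ z hxz hxz' ⟨x, hx, rfl⟩
    by_cases hz : z ∈ Set.range φ
    · obtain ⟨y, rfl⟩ := hz
      exact ⟨y, mem_edgeSide_of_adj (φ.map_adj_iff.1 hxz) (hne.1 hxz') hx, rfl⟩
    · exact absurd (hφ x z hxz hz ▸ hx) hr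
  · rw [Set.image_subset_iff]
    exact edgeSide_subset (left_mem_edgeSide T' _ _) fun x y hxy hxy' ↦
      mem_edgeSide_of_adj (φ.map_adj_iff.2 hxy) (hne.2 hxy')

theorem right_notMem_edgeSide_map (hT : T.IsTree) (φ : T ↪g T')
    (hφ : ∀ x z, T'.Adj (φ x) z → z ∉ Set.range φ → x = r) (hab : T.Adj a b) :
    φ b ∉ edgeSide T' (φ a) (φ b) := by
  wlog hr : r ∉ edgeSide T a b generalizing a b
  · refine right_notMem_edgeSide_comm.1 (this hab.symm ?_)
    rwa [← compl_edgeSide hT hab, Set.mem_compl_iff]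
  · rw [edgeSide_map_of_notMem φ hφ hr, φ.injective.mem_set_image]
    exact right_notMem_edgeSide hT.isAcyclic hab

theorem root_notMem_edgeSide_of_map (hT : T.IsTree) (hT' : T'.IsTree) (φ : T ↪g T')
    (hφ : ∀ x z, T'.Adj (φ x) z → z ∉ Set.range φ → x = r) (hab : T.Adj a b) {z : V'}
    (hz : z ∈ Set.range φ → z = φ r) (hzab : z ∉ edgeSide T' (φ a) (φ b)) :
    r ∉ edgeSide T a b := by
  intro hr
  have hr' : r ∉ edgeSide T b a := by rwa [← compl_edgeSide hT hab, Set.notMem_compl_iff]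
  rw [← Set.mem_compl_iff, compl_edgeSide hT' (φ.map_adj_iff.2 hab),
    edgeSide_map_of_notMem φ hφ hr'] at hzab
  rw [hz (Set.image_subset_range _ _ hzab), φ.injective.mem_set_image] at hzab
  exact hr' hzab

end AttachedTree

section JoinTree

variable {V₁ V₂ : Type*} {T₁ : SimpleGraph V₁} {T₂ : SimpleGraph V₂} {r₁ : V₁} {r₂ : V₂}

/-- The disjoint union of `T₁` and `T₂` together with the edge `r₁r₂`. -/
def joinTree (T₁ : SimpleGraph V₁) (T₂ : SimpleGraph V₂) (r₁ : V₁) (r₂ : V₂) :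
    SimpleGraph (V₁ ⊕ V₂) :=
  (T₁ ⊕g T₂) ⊔ edge (.inl r₁) (.inr r₂)

theorem joinTree_adj_inl_inr {a : V₁} {b : V₂} :
    (joinTree T₁ T₂ r₁ r₂).Adj (.inl a) (.inr b) ↔ a = r₁ ∧ b = r₂ := by
  simp [joinTree, edge_adj]

/-- The inclusion of the first tree into the join. -/
def joinTreeInl (T₁ : SimpleGraph V₁) (T₂ : SimpleGraph V₂) (r₁ : V₁) (r₂ : V₂) :
    T₁ ↪g joinTree T₁ T₂ r₁ r₂ :=
  ⟨.inl, by simp [joinTree, edge_adj]⟩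

/-- The inclusion of the second tree into the join. -/
def joinTreeInr (T₁ : SimpleGraph V₁) (T₂ : SimpleGraph V₂) (r₁ : V₁) (r₂ : V₂) :
    T₂ ↪g joinTree T₁ T₂ r₁ r₂ :=
  ⟨.inr, by simp [joinTree, edge_adj]⟩

theorem eq_root_of_joinTreeInl_adj (x : V₁) (z : V₁ ⊕ V₂)
    (h : (joinTree T₁ T₂ r₁ r₂).Adj (joinTreeInl T₁ T₂ r₁ r₂ x) z)
    (hz : z ∉ Set.range (joinTreeInl T₁ T₂ r₁ r₂)) : x = r₁ := by
  rcases z with y | y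
  exacts [absurd ⟨y, rfl⟩ hz, (joinTree_adj_inl_inr.1 h).1]

theorem eq_root_of_joinTreeInr_adj (x : V₂) (z : V₁ ⊕ V₂)
    (h : (joinTree T₁ T₂ r₁ r₂).Adj (joinTreeInr T₁ T₂ r₁ r₂ x) z)
    (hz : z ∉ Set.range (joinTreeInr T₁ T₂ r₁ r₂)) : x = r₂ := by
  rcases z with y | y
  exacts [(joinTree_adj_inl_inr.1 h.symm).2, absurd ⟨y, rfl⟩ hz]

theorem edgeSide_joinTree_inl_inl {a b : V₁} (hr : r₁ ∉ edgeSide T₁ a b) :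
    edgeSide (joinTree T₁ T₂ r₁ r₂) (.inl a) (.inl b) = Sum.inl '' edgeSide T₁ a b :=
  edgeSide_map_of_notMem (joinTreeInl T₁ T₂ r₁ r₂) eq_root_of_joinTreeInl_adj hr

theorem edgeSide_joinTree_inr_inr {a b : V₂} (hr : r₂ ∉ edgeSide T₂ a b) :
    edgeSide (joinTree T₁ T₂ r₁ r₂) (.inr a) (.inr b) = Sum.inr '' edgeSide T₂ a b :=
  edgeSide_map_of_notMem (joinTreeInr T₁ T₂ r₁ r₂) eq_root_of_joinTreeInr_adj hr

theorem edgeSide_joinTree_inl_inr (h₁ : T₁.Connected) :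
    edgeSide (joinTree T₁ T₂ r₁ r₂) (.inl r₁) (.inr r₂) = Set.range Sum.inl := by
  apply Set.Subset.antisymm
  · refine edgeSide_subset ⟨r₁, rfl⟩ ?_
    rintro _ (y | y) hxy hne ⟨x, rfl⟩
    · exact ⟨y, rfl⟩
    · obtain ⟨rfl, rfl⟩ := joinTree_adj_inl_inr.1 hxy
      exact absurd rfl hne
  · rintro _ ⟨x, rfl⟩
    suffices x ∈ Sum.inl ⁻¹' edgeSide (joinTree T₁ T₂ r₁ r₂) (.inl r₁) (.inr r₂) from this
    refine mem_of_reachable_of_adj_closed (fun y z hyz hy ↦ ?_) (h₁.preconnected r₁ x)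
      (left_mem_edgeSide _ _ _)
    have hyz' : (joinTree T₁ T₂ r₁ r₂).Adj (.inl y) (.inl z) :=
      (joinTreeInl T₁ T₂ r₁ r₂).map_adj_iff.2 hyz
    exact mem_edgeSide_of_adj hyz' (by simp) hy

theorem isTree_joinTree (h₁ : T₁.IsTree) (h₂ : T₂.IsTree) :
    (joinTree T₁ T₂ r₁ r₂).IsTree := by
  refine ⟨h₁.connected.sum_sup_edge h₂.connected, isAcyclic_iff_right_notMem_edgeSide.2 ?_⟩
  have hmiddle : Sum.inr r₂ ∉ edgeSide (joinTree T₁ T₂ r₁ r₂) (.inl r₁) (.inr r₂) := by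
    simp [edgeSide_joinTree_inl_inr h₁.connected]
  rintro (a | a) (b | b) hab
  · exact right_notMem_edgeSide_map h₁ _ eq_root_of_joinTreeInl_adj
      ((joinTreeInl T₁ T₂ r₁ r₂).map_adj_iff.1 hab)
  · obtain ⟨rfl, rfl⟩ := joinTree_adj_inl_inr.1 hab
    exact hmiddle
  · obtain ⟨rfl, rfl⟩ := joinTree_adj_inl_inr.1 hab.symm
    exact right_notMem_edgeSide_comm.1 hmiddle
  · exact right_notMem_edgeSide_map h₂ _ eq_root_of_joinTreeInr_adj
      ((joinTreeInr T₁ T₂ r₁ r₂).map_adj_iff.1 hab)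

variable [Finite V₁] [Finite V₂]

theorem ncard_neighborSet_joinTree_inl [DecidableEq V₁] (v : V₁) :
    ((joinTree T₁ T₂ r₁ r₂).neighborSet (.inl v)).ncard =
      (T₁.neighborSet v).ncard + if v = r₁ then 1 else 0 := by
  have h : (joinTree T₁ T₂ r₁ r₂).neighborSet (.inl v) =
      Sum.inl '' T₁.neighborSet v ∪ Sum.inr '' {w | v = r₁ ∧ w = r₂} := by
    ext (w | w) <;> simp [joinTree, edge_adj]
  rw [h, Set.ncard_union_eq (by simp [Set.disjoint_left]),
    Set.ncard_image_of_injective _ Sum.inl_injective,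
    Set.ncard_image_of_injective _ Sum.inr_injective]
  split_ifs with hv <;> simp [hv]

theorem ncard_neighborSet_joinTree_inr [DecidableEq V₂] (v : V₂) :
    ((joinTree T₁ T₂ r₁ r₂).neighborSet (.inr v)).ncard =
      (T₂.neighborSet v).ncard + if v = r₂ then 1 else 0 := by
  have h : (joinTree T₁ T₂ r₁ r₂).neighborSet (.inr v) =
      Sum.inr '' T₂.neighborSet v ∪ Sum.inl '' {w | v = r₂ ∧ w = r₁} := by
    ext (w | w) <;> simp [joinTree, edge_adj]
  rw [h, Set.ncard_union_eq (by simp [Set.disjoint_left]),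
    Set.ncard_image_of_injective _ Sum.inl_injective,
    Set.ncard_image_of_injective _ Sum.inr_injective]
  split_ifs with hv <;> simp [hv]

end JoinTree

/-! ### Rooted branch-decompositions -/

section RootedDecomposition

variable {V : Type*} {α : Type*} {F : Set α → Prop} {S S₁ S₂ : Set α} {s : ℕ}

open scoped Classical in
/-- The degree of `v` in the tree `T` with `s` additional half-edges hanging off the root `r`. -/
noncomputable def rootedDegree (T : SimpleGraph V) (r : V) (s : ℕ) (v : V) : ℕ :=
  (T.neighborSet v).ncard + if v = r then s else 0

/-- A branch-decomposition of `S` with `s` free half-edges at its root: all degrees are `1` or `3`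
once the half-edges are counted, `L` labels the leaves by `S`, and every part cut off from the root
by an edge satisfies `F`. -/
structure IsRootedDecomposition (F : Set α → Prop) (S : Set α) (s : ℕ) (T : SimpleGraph V) (r : V)
    (L : α → V) : Prop where
  isTree : T.IsTree
  degree_eq : ∀ v, rootedDegree T r s v = 1 ∨ rootedDegree T r s v = 3
  bijOn : Set.BijOn L S {v | rootedDegree T r s v = 1}
  cut : ∀ a b, T.Adj a b → r ∉ edgeSide T a b → F {x ∈ S | L x ∈ edgeSide T a b}

/-- The existence of a finite rooted branch-decomposition of `S` with `s` free half-edges. -/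
def HasRootedDecomposition (F : Set α → Prop) (S : Set α) (s : ℕ) : Prop :=
  ∃ (V : Type) (_ : Fintype V) (T : SimpleGraph V) (r : V) (L : α → V),
    IsRootedDecomposition F S s T r L

theorem hasRootedDecomposition_singleton (F : Set α → Prop) (x : α) :
    HasRootedDecomposition F {x} 1 := by
  refine ⟨Unit, inferInstance, ⊥, (), fun _ ↦ (), .of_subsingleton, ?_, ?_, by simp⟩
  · simp [rootedDegree, neighborSet]
  · simp [rootedDegree, neighborSet, Set.BijOn, Set.MapsTo, Set.SurjOn, Set.subset_def]

theorem hasRootedDecomposition_empty (F : Set α → Prop) : HasRootedDecomposition F ∅ 3 := by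
  refine ⟨Unit, inferInstance, ⊥, (), fun _ ↦ (), .of_subsingleton, ?_, ?_, by simp⟩
  · simp [rootedDegree, neighborSet]
  · simp [rootedDegree, neighborSet]

section Join

variable {V₁ V₂ : Type*} {T₁ : SimpleGraph V₁} {T₂ : SimpleGraph V₂}
  {r₁ : V₁} {r₂ : V₂} {L₁ : α → V₁} {L₂ : α → V₂}

open scoped Classical in
theorem sep_piecewise_mem_image_inl (W : Set V₁) :
    {x ∈ S₁ ∪ S₂ | S₁.piecewise (.inl ∘ L₁) (.inr ∘ L₂) x ∈ (Sum.inl '' W : Set (V₁ ⊕ V₂))} =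
      {x ∈ S₁ | L₁ x ∈ W} := by
  ext x
  by_cases hx : x ∈ S₁ <;> simp [hx]

open scoped Classical in
theorem sep_piecewise_mem_image_inr (hS : Disjoint S₁ S₂) (W : Set V₂) :
    {x ∈ S₁ ∪ S₂ | S₁.piecewise (.inl ∘ L₁) (.inr ∘ L₂) x ∈ (Sum.inr '' W : Set (V₁ ⊕ V₂))} =
      {x ∈ S₂ | L₂ x ∈ W} := by
  ext x
  by_cases hx : x ∈ S₁ <;> simp [hx, hS.notMem_of_mem_left]

variable [Finite V₁] [Finite V₂]

theorem rootedDegree_joinTree_inl (v : V₁) :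
    rootedDegree (joinTree T₁ T₂ r₁ r₂) (.inr r₂) s (.inl v) = rootedDegree T₁ r₁ 1 v := by
  classical
  simp [rootedDegree, ncard_neighborSet_joinTree_inl]

theorem rootedDegree_joinTree_inr (v : V₂) :
    rootedDegree (joinTree T₁ T₂ r₁ r₂) (.inr r₂) s (.inr v) = rootedDegree T₂ r₂ (s + 1) v := by
  classical
  by_cases hv : v = r₂
  · simp [rootedDegree, ncard_neighborSet_joinTree_inr, hv, add_assoc, add_comm 1 s]
  · simp [rootedDegree, ncard_neighborSet_joinTree_inr, hv]

open scoped Classical in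
theorem bijOn_joinTree_leaves (hS : Disjoint S₁ S₂)
    (h₁ : Set.BijOn L₁ S₁ {v | rootedDegree T₁ r₁ 1 v = 1})
    (h₂ : Set.BijOn L₂ S₂ {v | rootedDegree T₂ r₂ (s + 1) v = 1}) :
    Set.BijOn (S₁.piecewise (.inl ∘ L₁) (.inr ∘ L₂)) (S₁ ∪ S₂)
      {v | rootedDegree (joinTree T₁ T₂ r₁ r₂) (.inr r₂) s v = 1} := by
  have hleaves : {v | rootedDegree (joinTree T₁ T₂ r₁ r₂) (.inr r₂) s v = 1} =
      Sum.inl '' {v | rootedDegree T₁ r₁ 1 v = 1} ∪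
        Sum.inr '' {v | rootedDegree T₂ r₂ (s + 1) v = 1} := by
    ext (v | v) <;> simp [rootedDegree_joinTree_inl, rootedDegree_joinTree_inr]
  have hinl : Set.BijOn (S₁.piecewise (.inl ∘ L₁) (.inr ∘ L₂)) S₁
      (Sum.inl '' {v | rootedDegree T₁ r₁ 1 v = 1}) :=
    (Sum.inl_injective.injOn.bijOn_image.comp h₁).congr (Set.piecewise_eqOn _ _ _).symm
  have hinr : Set.BijOn (S₁.piecewise (.inl ∘ L₁) (.inr ∘ L₂)) S₂
      (Sum.inr '' {v | rootedDegree T₂ r₂ (s + 1) v = 1}) :=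
    (Sum.inr_injective.injOn.bijOn_image.comp h₂).congr
      ((Set.piecewise_eqOn_compl _ _ _).mono hS.subset_compl_left).symm
  rw [hleaves]
  refine hinl.union hinr ((Set.injOn_union hS).2 ⟨hinl.injOn, hinr.injOn, fun x hx y hy ↦ ?_⟩)
  simp [hx, hS.notMem_of_mem_right hy]

theorem IsRootedDecomposition.join (h₁ : IsRootedDecomposition F S₁ 1 T₁ r₁ L₁)
    (h₂ : IsRootedDecomposition F S₂ (s + 1) T₂ r₂ L₂) (hS : Disjoint S₁ S₂) (hF : F S₁) :
    ∃ L, IsRootedDecomposition F (S₁ ∪ S₂) s (joinTree T₁ T₂ r₁ r₂) (.inr r₂) L := by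
  classical
  have hJ := isTree_joinTree (r₁ := r₁) (r₂ := r₂) h₁.isTree h₂.isTree
  refine ⟨S₁.piecewise (.inl ∘ L₁) (.inr ∘ L₂), hJ, ?_, bijOn_joinTree_leaves hS h₁.bijOn h₂.bijOn,
    ?_⟩
  · rintro (v | v)
    · rw [rootedDegree_joinTree_inl]
      exact h₁.degree_eq v
    · rw [rootedDegree_joinTree_inr]
      exact h₂.degree_eq v
  rintro (a | a) (b | b) hab hr
  · have hab' : T₁.Adj a b := (joinTreeInl T₁ T₂ r₁ r₂).map_adj_iff.1 hab
    have hr₁ := root_notMem_edgeSide_of_map h₁.isTree hJ _ eq_root_of_joinTreeInl_adj hab'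
      (by simp [joinTreeInl]) hr
    rw [edgeSide_joinTree_inl_inl hr₁, sep_piecewise_mem_image_inl]
    exact h₁.cut a b hab' hr₁
  · obtain ⟨rfl, rfl⟩ := joinTree_adj_inl_inr.1 hab
    rw [edgeSide_joinTree_inl_inr h₁.isTree.connected, ← Set.image_univ,
      sep_piecewise_mem_image_inl]
    simpa using hF
  · obtain ⟨rfl, rfl⟩ := joinTree_adj_inl_inr.1 hab.symm
    exact absurd (left_mem_edgeSide _ _ _) hr
  · have hab' : T₂.Adj a b := (joinTreeInr T₁ T₂ r₁ r₂).map_adj_iff.1 hab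
    have hr₂ := root_notMem_edgeSide_of_map h₂.isTree hJ _ eq_root_of_joinTreeInr_adj hab'
      (fun _ ↦ rfl) hr
    rw [edgeSide_joinTree_inr_inr hr₂, sep_piecewise_mem_image_inr hS]
    exact h₂.cut a b hab' hr₂

end Join

theorem HasRootedDecomposition.join (h₁ : HasRootedDecomposition F S₁ 1)
    (h₂ : HasRootedDecomposition F S₂ (s + 1)) (hS : Disjoint S₁ S₂) (hF : F S₁) :
    HasRootedDecomposition F (S₁ ∪ S₂) s := by
  obtain ⟨V₁, _, T₁, r₁, L₁, h₁⟩ := h₁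
  obtain ⟨V₂, _, T₂, r₂, L₂, h₂⟩ := h₂
  obtain ⟨L, hL⟩ := h₁.join h₂ hS hF
  exact ⟨V₁ ⊕ V₂, inferInstance, joinTree T₁ T₂ r₁ r₂, .inr r₂, L, hL⟩

end RootedDecomposition

/-! ### Binary hierarchies of cuts -/

section Branching

variable {α : Type*} {F : Set α → Prop} {S R : Set α}

/-- `S` can be assembled from singletons by disjoint unions all of whose nonempty stages satisfy
`F`. The empty set is admitted so that a union need not distinguish which of its parts occur. -/
inductive IsBranching (F : Set α → Prop) : Set α → Prop
  | empty : IsBranching F ∅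
  | singleton (x : α) (hx : F {x}) : IsBranching F {x}
  | union {S R : Set α} (hS : IsBranching F S) (hR : IsBranching F R) (hSR : Disjoint S R)
      (hF : F (S ∪ R)) : IsBranching F (S ∪ R)

theorem IsBranching.mono [Finite α] (hS : IsBranching F S) (hSR : S ⊆ R) (hF₁ : ∀ x, F {x})
    (hF : ∀ W, S ⊆ W → W ⊆ R → F W) : IsBranching F R := by
  rw [← Set.union_sdiff_cancel hSR]
  refine Set.Finite.induction_on_subset (R \ S) (Set.toFinite _) (by simpa using hS)
    fun {x D} hx hD hxD ih ↦ ?_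
  rw [Set.insert_eq, Set.union_comm {x}, ← Set.union_assoc]
  refine ih.union (.singleton x (hF₁ x)) ?_ (hF _ ?_ ?_)
  · simpa using ⟨hx.2, hxD⟩
  · exact Set.subset_union_left.trans Set.subset_union_left
  · exact Set.union_subset (Set.union_subset hSR (hD.trans Set.sdiff_subset))
      (Set.singleton_subset_iff.2 hx.1)

theorem IsBranching.prop_and_hasRootedDecomposition_one (h : IsBranching F S) (hne : S.Nonempty) :
    F S ∧ HasRootedDecomposition F S 1 := by
  induction h with
  | empty => simp at hne
  | singleton x hx => exact ⟨hx, hasRootedDecomposition_singleton F x⟩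
  | @union S R _ _ hSR hF ihS ihR =>
    refine ⟨hF, ?_⟩
    obtain rfl | hSne := S.eq_empty_or_nonempty
    · rw [Set.empty_union] at hne ⊢
      exact (ihR hne).2
    obtain rfl | hRne := R.eq_empty_or_nonempty
    · rw [Set.union_empty] at hne ⊢
      exact (ihS hne).2
    -- A new root of degree three: two children and one free half-edge.
    have hroot : HasRootedDecomposition F R 2 := by
      simpa using (ihR hRne).2.join (hasRootedDecomposition_empty F) (by simp) (ihR hRne).1
    exact (ihS hSne).2.join hroot hSR (ihS hSne).1

theorem IsBranching.hasRootedDecomposition_zero (h : IsBranching F S) (hS : S.Nontrivial) :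
    HasRootedDecomposition F S 0 := by
  induction h with
  | empty => simp at hS
  | singleton => simp at hS
  | @union S R hS' hR' hSR hF ihS ihR =>
    obtain rfl | hSne := S.eq_empty_or_nonempty
    · rw [Set.empty_union] at hS ⊢
      exact ihR hS
    obtain rfl | hRne := R.eq_empty_or_nonempty
    · rw [Set.union_empty] at hS ⊢
      exact ihS hS
    obtain ⟨hF, hdec⟩ := hS'.prop_and_hasRootedDecomposition_one hSne
    exact hdec.join (hR'.prop_and_hasRootedDecomposition_one hRne).2 hSR hF

/-- The existence of a branch-decomposition over `α` all of whose cuts satisfy `F`. -/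
def HasBranchDecomposition (F : Set α → Prop) : Prop :=
  ∃ (V : Type) (_ : Fintype V) (T : SimpleGraph V), T.IsTree ∧
    (∀ v : V, (T.neighborSet v).ncard = 1 ∨ (T.neighborSet v).ncard = 3) ∧
    ∃ L : α ≃ {v : V // (T.neighborSet v).ncard = 1},
      ∀ a b : V, T.Adj a b → F {x : α | (L x : V) ∈ edgeSide T a b}

theorem HasBranchDecomposition.imp {F' : Set α → Prop} (h : HasBranchDecomposition F)
    (hF : ∀ S, F S → F' S) : HasBranchDecomposition F' := by
  obtain ⟨V, _, T, hT, hdeg, L, hL⟩ := h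
  exact ⟨V, inferInstance, T, hT, hdeg, L, fun a b hab ↦ hF _ (hL a b hab)⟩

theorem HasRootedDecomposition.hasBranchDecomposition (h : HasRootedDecomposition F .univ 0)
    (hF : ∀ S, F S → F Sᶜ) : HasBranchDecomposition F := by
  obtain ⟨V, _, T, r, L, hL⟩ := h
  have hdeg (v : V) : rootedDegree T r 0 v = (T.neighborSet v).ncard := by simp [rootedDegree]
  have hcut := hL.cut
  simp only [Set.mem_univ, true_and] at hcut
  refine ⟨V, inferInstance, T, hL.isTree, fun v ↦ hdeg v ▸ hL.degree_eq v,
    (Equiv.Set.univ α).symm.trans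
      ((hL.bijOn.equiv).trans (Equiv.subtypeEquivRight fun v ↦ by simp [hdeg])),
    fun a b hab ↦ ?_⟩
  by_cases hr : r ∈ edgeSide T a b
  · have hr' : r ∉ edgeSide T b a := by rwa [← compl_edgeSide hL.isTree hab, Set.notMem_compl_iff]
    have h := hF _ (hcut b a hab.symm hr')
    rwa [← Set.preimage, ← Set.preimage_compl, compl_edgeSide hL.isTree hab.symm] at h
  · exact hcut a b hab hr

theorem IsBranching.hasBranchDecomposition [Nontrivial α] (h : IsBranching F .univ)
    (hF : ∀ S, F S → F Sᶜ) : HasBranchDecomposition F :=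
  (h.hasRootedDecomposition_zero Set.nontrivial_univ).hasBranchDecomposition hF

end Branching

/-! ### Cut matchings and vertex covers -/

section Konig

variable {V : Type*} {G H : SimpleGraph V} {C : Set V}

theorem isVertexCover_between_left (G : SimpleGraph V) (S : Set V) :
    (G.between S Sᶜ).IsVertexCover S := fun _ _ huv ↦
  (between_adj.1 huv).2.imp And.left And.right

theorem isVertexCover_between_iff {S : Set V} :
    (G.between S Sᶜ).IsVertexCover C ↔
      ∀ u v, G.Adj u v → u ∈ S → v ∉ S → u ∈ C ∨ v ∈ C := by
  refine ⟨fun h u v huv hu hv ↦ h (between_adj.2 ⟨huv, .inl ⟨hu, hv⟩⟩), fun h u v huv ↦ ?_⟩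
  obtain ⟨huv, ⟨hu, hv⟩ | ⟨hu, hv⟩⟩ := between_adj.1 huv
  exacts [h u v huv hu hv, (h v u huv.symm hv hu).symm]

theorem ncard_edgeSet_le_of_isMatching [Finite V] {M : G.Subgraph} (hM : M.IsMatching)
    (hC : ∀ u v, M.Adj u v → u ∈ C ∨ v ∈ C) : M.edgeSet.ncard ≤ C.ncard := by
  obtain _ | _ := isEmpty_or_nonempty V
  · simp [Set.eq_empty_of_isEmpty]
  have hmem : ∀ e ∈ M.edgeSet, ∃ v ∈ C, ∃ w, M.Adj v w ∧ s(v, w) = e := by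
    refine Sym2.ind fun u v (huv : M.Adj u v) ↦ ?_
    rcases hC u v huv with hu | hv
    exacts [⟨u, hu, v, huv, rfl⟩, ⟨v, hv, u, huv.symm, Sym2.eq_swap⟩]
  choose! g hgC w hgw hg using hmem
  refine Set.ncard_le_ncard_of_injOn g hgC fun e he e' he' heq ↦ ?_
  rw [← hg e he, ← hg e' he', ← heq, hM.eq_of_adj_left (hgw e he) (heq ▸ hgw e' he')]

theorem ncard_le_ncard_edgeSet_of_subset_verts [Finite V] {M : (H.between C Cᶜ).Subgraph}
    (hM : M.IsMatching) (hC : C ⊆ M.verts) : C.ncard ≤ M.edgeSet.ncard := by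
  have hcross {v w : V} (hvw : M.Adj v w) (hv : v ∈ C) : w ∉ C := by
    have := (between_adj.1 hvw.adj_sub).2
    grind
  have hpartner : ∀ v ∈ C, ∃ w, M.Adj v w := fun v hv ↦ (hM (hC hv)).exists
  choose! g hg using hpartner
  refine Set.ncard_le_ncard_of_injOn (fun v ↦ s(v, g v)) hg fun v hv w hw heq ↦ ?_
  rcases Sym2.eq_iff.1 heq with ⟨rfl, -⟩ | ⟨rfl, -⟩
  · rfl
  · exact absurd hv (hcross (hg w hw) hw)

theorem ncard_le_ncard_neighbors_sdiff_of_minimum_cover [Finite V] (hC : H.IsVertexCover C)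
    (hmin : ∀ D, H.IsVertexCover D → C.ncard ≤ D.ncard) {A : Set V} (hAC : A ⊆ C)
    (hA : H.IsIndepSet A) : A.ncard ≤ ((⋃ x ∈ A, H.neighborSet x) \ C).ncard := by
  set N := (⋃ x ∈ A, H.neighborSet x) \ C
  have hcover : H.IsVertexCover (C \ A ∪ N) := by
    suffices ∀ v w, H.Adj v w → v ∈ C → v ∈ C \ A ∪ N ∨ w ∈ C \ A ∪ N from
      fun v w hvw ↦ (hC hvw).elim (this v w hvw) fun hw ↦ (this w v hvw.symm hw).symm
    intro v w hvw hv
    by_cases hvA : v ∈ A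
    · have hwA : w ∉ A := fun hwA ↦ hA hvA hwA hvw.ne hvw
      have hwN : w ∈ ⋃ x ∈ A, H.neighborSet x := Set.mem_biUnion hvA hvw
      by_cases hwC : w ∈ C
      exacts [.inr (.inl ⟨hwC, hwA⟩), .inr (.inr ⟨hwN, hwC⟩)]
    · exact .inl (.inl ⟨hv, hvA⟩)
  have hle := (hmin _ hcover).trans (Set.ncard_union_le _ _)
  have := Set.ncard_sdiff_add_ncard_of_subset hAC
  omega

theorem ncard_le_ncard_neighbors_of_minimum_cover [Finite V] {s t : Set V}
    (hH : H.IsBipartiteWith s t) (hC : H.IsVertexCover C)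
    (hmin : ∀ D, H.IsVertexCover D → C.ncard ≤ D.ncard) {A : Set V} (hAC : A ⊆ C) :
    A.ncard ≤ (⋃ x ∈ A, (H.between C Cᶜ).neighborSet x).ncard := by
  have hcross {x y : V} (hxy : H.Adj x y) : x ∈ s ↔ y ∉ s := by
    have := hH.mem_of_adj hxy
    have := Set.disjoint_left.1 hH.disjoint
    grind
  have hhall (B : Set V) (hBA : B ⊆ A) (hB : ∀ x ∈ B, ∀ y ∈ B, (x ∈ s ↔ y ∈ s)) :=
    ncard_le_ncard_neighbors_sdiff_of_minimum_cover hC hmin (hBA.trans hAC)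
      fun x hx y hy _ hxy ↦ by grind
  have hdisj : Disjoint ((⋃ x ∈ A ∩ s, H.neighborSet x) \ C)
      ((⋃ x ∈ A \ s, H.neighborSet x) \ C) := by
    refine Set.disjoint_left.2 fun y hy hy' ↦ ?_
    simp only [Set.mem_sdiff, Set.mem_iUnion, mem_neighborSet] at hy hy'
    grind
  rw [← Set.ncard_inter_add_ncard_sdiff_eq_ncard A s]
  refine (add_le_add (hhall _ Set.inter_subset_left ?_)
    (hhall _ Set.sdiff_subset ?_)).trans ?_
  · grind
  · grind
  rw [← Set.ncard_union_eq hdisj]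
  refine Set.ncard_le_ncard fun y hy ↦ ?_
  simp only [Set.mem_union, Set.mem_sdiff, Set.mem_iUnion, mem_neighborSet, between_adj,
    Set.mem_compl_iff] at hy ⊢
  grind

/-- Kőnig's theorem; Hall's condition for matching `C` into its complement is minimality of `C`. -/
theorem exists_isMatching_ncard_le_of_minimum_cover [Finite V] {s t : Set V}
    (hH : H.IsBipartiteWith s t) (hC : H.IsVertexCover C)
    (hmin : ∀ D, H.IsVertexCover D → C.ncard ≤ D.ncard) :
    ∃ M : H.Subgraph, M.IsMatching ∧ C.ncard ≤ M.edgeSet.ncard := by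
  have : (H.between C Cᶜ).LocallyFinite := fun _ ↦ Fintype.ofFinite _
  obtain ⟨M, hCM, hM⟩ := exists_isMatching_of_forall_ncard_le
    (between_isBipartiteWith disjoint_compl_right)
    fun _ hAC ↦ ncard_le_ncard_neighbors_of_minimum_cover hH hC hmin hAC
  refine ⟨M.map (Hom.ofLE between_le), hM.map_ofLE between_le, ?_⟩
  simpa [Subgraph.edgeSet_map] using ncard_le_ncard_edgeSet_of_subset_verts hM hCM

theorem exists_minimum_vertexCover [Finite V] (H : SimpleGraph V) :
    ∃ C, H.IsVertexCover C ∧ ∀ D, H.IsVertexCover D → C.ncard ≤ D.ncard :=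
  Set.exists_min_image {C | H.IsVertexCover C} Set.ncard (Set.toFinite _)
    ⟨.univ, isVertexCover_univ⟩

end Konig

section CutMatching

variable {α : Type} [Fintype α] {G : SimpleGraph α} {S C : Set α}

theorem mm_le_ncard (hC : (G.between S Sᶜ).IsVertexCover C) : mm G S ≤ C.ncard := by
  refine csSup_le' ?_
  rintro _ ⟨M, hM, hS, rfl⟩
  refine ncard_edgeSet_le_of_isMatching hM fun u v huv ↦ hC (between_adj.2 ⟨huv.adj_sub, ?_⟩)
  have := hS u v huv
  grind

theorem ncard_edgeSet_le_mm {M : (G.between S Sᶜ).Subgraph} (hM : M.IsMatching) :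
    M.edgeSet.ncard ≤ mm G S := by
  refine le_csSup ⟨(Set.univ : Set α).ncard, ?_⟩
    ⟨M.map (Hom.ofLE between_le), hM.map_ofLE between_le, ?_, by simp [Subgraph.edgeSet_map]⟩
  · rintro _ ⟨M', hM', -, rfl⟩
    exact ncard_edgeSet_le_of_isMatching hM' fun _ _ _ ↦ .inl (Set.mem_univ _)
  · intro u v huv
    have huv' : M.Adj u v := by simpa using huv
    have := (between_adj.1 huv'.adj_sub).2
    grind

theorem exists_isVertexCover_ncard_le_mm (G : SimpleGraph α) (S : Set α) :
    ∃ C, (G.between S Sᶜ).IsVertexCover C ∧ C.ncard ≤ mm G S := by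
  obtain ⟨C, hC, hmin⟩ := exists_minimum_vertexCover (G.between S Sᶜ)
  obtain ⟨M, hM, hle⟩ := exists_isMatching_ncard_le_of_minimum_cover
    (between_isBipartiteWith disjoint_compl_right) hC hmin
  exact ⟨C, hC, hle.trans (ncard_edgeSet_le_mm hM)⟩

theorem mm_compl (G : SimpleGraph α) (S : Set α) : mm G Sᶜ = mm G S := by
  have hiff (u v : α) : (u ∉ S ↔ v ∈ S) ↔ (u ∈ S ↔ v ∉ S) := by tauto
  simp only [mm, Set.mem_compl_iff, not_not, hiff]

theorem one_le_mm_singleton {x y : α} (hxy : G.Adj x y) : 1 ≤ mm G {x} := by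
  obtain ⟨C, hC, hle⟩ := exists_isVertexCover_ncard_le_mm G {x}
  refine le_trans ((Set.ncard_pos (Set.toFinite C)).2 ?_) hle
  rcases hC (between_adj.2 ⟨hxy, .inl ⟨rfl, hxy.ne'⟩⟩) with hx | hy
  exacts [⟨x, hx⟩, ⟨y, hy⟩]

theorem mmw_le_iff_hasBranchDecomposition [Nontrivial α] {k : ℕ} :
    mmw G ≤ k ↔ HasBranchDecomposition (mm G · ≤ k) := by
  have hne : {k | HasBranchDecomposition (mm G · ≤ k)}.Nonempty :=
    have hF (S : Set α) : mm G S ≤ (Set.univ : Set α).ncard := mm_le_ncard isVertexCover_univ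
    ⟨_, (IsBranching.empty.mono (Set.empty_subset _) (fun _ ↦ hF _)
      fun _ _ _ ↦ hF _).hasBranchDecomposition fun _ _ ↦ hF _⟩
  have hmin : HasBranchDecomposition (mm G · ≤ mmw G) := Nat.sInf_mem hne
  exact ⟨fun h ↦ hmin.imp fun _ hS ↦ hS.trans h, fun h ↦ Nat.sInf_le h⟩

end CutMatching

/-! ### Uncrossing minimum cut covers -/

section CutCover

variable {α : Type*} {G : SimpleGraph α} {S R C D : Set α}

/-- `C` is a vertex cover of the edges crossing the cut `(S, Sᶜ)` that moreover contains `u` if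
`{u}` is one of the two parts. The second requirement makes every vertex occur in some cover, and
is preserved by uncrossing. -/
structure IsCutCover (G : SimpleGraph α) (S C : Set α) : Prop where
  isVertexCover : (G.between S Sᶜ).IsVertexCover C
  mem_of_eq_singleton : ∀ u, S = {u} → u ∈ C
  mem_of_compl_eq_singleton : ∀ u, Sᶜ = {u} → u ∈ C

theorem isCutCover_univ (G : SimpleGraph α) (S : Set α) : IsCutCover G S .univ :=
  ⟨isVertexCover_univ, fun _ _ ↦ trivial, fun _ _ ↦ trivial⟩

theorem IsCutCover.mem_or_mem (h : IsCutCover G S C) {u v : α} (huv : G.Adj u v) (hu : u ∈ S)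
    (hv : v ∉ S) : u ∈ C ∨ v ∈ C :=
  isVertexCover_between_iff.1 h.isVertexCover u v huv hu hv

theorem isCutCover_compl : IsCutCover G Sᶜ C ↔ IsCutCover G S C := by
  have hbetween : G.between Sᶜ S = G.between S Sᶜ := between_comm
  constructor <;> rintro ⟨h₁, h₂, h₃⟩ <;> refine ⟨?_, ?_, ?_⟩ <;> simp_all

theorem IsCutCover.uncross (hRS : R ⊆ S) (hC : IsCutCover G S C) (hD : IsCutCover G R D) :
    IsCutCover G R (D ∩ S ∪ C ∩ R ∪ C ∩ D) := by
  refine ⟨isVertexCover_between_iff.2 fun u v huv hu hv ↦ ?_, fun u hu ↦ ?_, fun u hu ↦ ?_⟩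
  · have hR := hD.mem_or_mem huv hu hv
    have hS := hC.mem_or_mem huv (hRS hu)
    grind
  · have huR : u ∈ R := hu ▸ rfl
    exact .inl (.inl ⟨hD.mem_of_eq_singleton u hu, hRS huR⟩)
  · have huD := hD.mem_of_compl_eq_singleton u hu
    by_cases huS : u ∈ S
    · exact .inl (.inl ⟨huD, huS⟩)
    · have hS : Sᶜ = {u} :=
        Set.Subset.antisymm (hu ▸ Set.compl_subset_compl.2 hRS) (Set.singleton_subset_iff.2 huS)
      exact .inr ⟨hC.mem_of_compl_eq_singleton u hS, huD⟩

/-- A cut cover of least size which, among those, has as many elements as possible in `S`. -/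
structure IsOptimalCutCover (G : SimpleGraph α) (S C : Set α) : Prop extends IsCutCover G S C where
  ncard_le : ∀ D, IsCutCover G S D → C.ncard ≤ D.ncard
  ncard_inter_le : ∀ D, IsCutCover G S D → D.ncard ≤ C.ncard → (D ∩ S).ncard ≤ (C ∩ S).ncard

variable [Finite α]

theorem exists_isOptimalCutCover (G : SimpleGraph α) (S : Set α) :
    ∃ C, IsOptimalCutCover G S C := by
  obtain ⟨C₀, hC₀, hmin⟩ := Set.exists_min_image {C | IsCutCover G S C} Set.ncard (Set.toFinite _)
    ⟨.univ, isCutCover_univ G S⟩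
  obtain ⟨C, ⟨hC, hCC₀⟩, hmax⟩ := Set.exists_max_image
    {C | IsCutCover G S C ∧ C.ncard ≤ C₀.ncard} (fun C ↦ (C ∩ S).ncard) (Set.toFinite _)
    ⟨C₀, hC₀, le_rfl⟩
  exact ⟨C, hC, fun D hD ↦ hCC₀.trans (hmin D hD), fun D hD hle ↦ hmax D ⟨hD, hle.trans hCC₀⟩⟩

theorem ncard_uncross_add_ncard_uncross_le (S R C D : Set α) :
    (D ∩ S ∪ C ∩ R ∪ C ∩ D).ncard + (C ∩ Rᶜ ∪ D ∩ Sᶜ ∪ D ∩ C).ncard ≤ D.ncard + C.ncard := by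
  rw [← Set.ncard_union_add_ncard_inter, ← Set.ncard_union_add_ncard_inter D]
  refine add_le_add (Set.ncard_le_ncard fun x hx ↦ ?_) (Set.ncard_le_ncard fun x hx ↦ ?_)
  · grind
  · grind

namespace IsOptimalCutCover

theorem ncard_uncross_le (hRS : R ⊆ S) (hD : IsOptimalCutCover G R D) (hC : IsCutCover G S C)
    (hmin : ∀ C', IsCutCover G S C' → C.ncard ≤ C'.ncard) :
    (D ∩ S ∪ C ∩ R ∪ C ∩ D).ncard ≤ D.ncard := by
  have hcompl : IsCutCover G S (C ∩ Rᶜ ∪ D ∩ Sᶜ ∪ D ∩ C) :=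
    isCutCover_compl.1 ((isCutCover_compl.2 hD.toIsCutCover).uncross
      (Set.compl_subset_compl.2 hRS) (isCutCover_compl.2 hC))
  have := hmin _ hcompl
  have := ncard_uncross_add_ncard_uncross_le S R C D
  omega

theorem inter_subset (hRS : R ⊆ S) (hD : IsOptimalCutCover G R D) (hC : IsCutCover G S C)
    (hmin : ∀ C', IsCutCover G S C' → C.ncard ≤ C'.ncard) : C ∩ R ⊆ D := by
  have hle := hD.ncard_inter_le _ (hC.uncross hRS hD.toIsCutCover)
    (hD.ncard_uncross_le hRS hC hmin)
  have hsub : D ∩ R ⊆ (D ∩ S ∪ C ∩ R ∪ C ∩ D) ∩ R := by grind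
  have heq := Set.eq_of_subset_of_ncard_le hsub hle
  rintro x ⟨hxC, hxR⟩
  exact (heq.ge ⟨.inl (.inr ⟨hxC, hxR⟩), hxR⟩).1

theorem sdiff_subset (hRS : R ⊆ S) (hD : IsOptimalCutCover G R D) (hC : IsCutCover G S C)
    (hmin : ∀ C', IsCutCover G S C' → C.ncard ≤ C'.ncard) : D \ S ⊆ C := by
  have hsub : D ∩ S ∪ C ∩ R ∪ C ∩ D ⊆ D := by
    have := hD.inter_subset hRS hC hmin
    grind
  have heq := Set.eq_of_subset_of_ncard_le hsub
    (hD.ncard_le _ (hC.uncross hRS hD.toIsCutCover))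
  grind

end IsOptimalCutCover

/-- A symmetric choice of a cut cover for every cut such that a vertex of `S` which covers a cut
beyond `S` also covers `S`. In a branch-decomposition, the tree edges whose covers contain a given
vertex then form a subtree. -/
structure IsCoherentCover (G : SimpleGraph α) (C : Set α → Set α) : Prop where
  isCutCover : ∀ S, IsCutCover G S (C S)
  compl : ∀ S, C Sᶜ = C S
  inter_subset : ∀ S R, S ⊆ R → C R ∩ S ⊆ C S

/-- Each cut is represented by its part avoiding a fixed vertex, so that the tie-breaking of
`IsOptimalCutCover` is always in favour of the same kind of part. -/
theorem exists_isCoherentCover_minimum [Nonempty α] (G : SimpleGraph α) :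
    ∃ C, IsCoherentCover G C ∧ ∀ S D, IsCutCover G S D → (C S).ncard ≤ D.ncard := by
  classical
  obtain ⟨x₀⟩ := ‹Nonempty α›
  choose B hB using exists_isOptimalCutCover G
  let C (S : Set α) : Set α := if x₀ ∈ S then B Sᶜ else B S
  have hcover (S : Set α) : IsCutCover G S (C S) := by
    by_cases hx : x₀ ∈ S
    · simpa only [C, if_pos hx] using isCutCover_compl.1 (hB Sᶜ).toIsCutCover
    · simpa only [C, if_neg hx] using (hB S).toIsCutCover
  have hmin (S D : Set α) (hD : IsCutCover G S D) : (C S).ncard ≤ D.ncard := by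
    by_cases hx : x₀ ∈ S
    · simpa only [C, if_pos hx] using (hB Sᶜ).ncard_le D (isCutCover_compl.2 hD)
    · simpa only [C, if_neg hx] using (hB S).ncard_le D hD
  refine ⟨C, ⟨hcover, fun S ↦ ?_, fun S R hSR ↦ ?_⟩, hmin⟩
  · by_cases hx : x₀ ∈ S <;> simp [C, hx]
  · by_cases hx : x₀ ∈ S
    · have := (hB Rᶜ).sdiff_subset (Set.compl_subset_compl.2 hSR) (hB Sᶜ).toIsCutCover
        (hB Sᶜ).ncard_le
      simp only [C, if_pos hx, if_pos (hSR hx)]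
      rwa [← Set.sdiff_compl]
    · have := (hB S).inter_subset hSR (hcover R) (hmin R)
      simpa only [C, if_neg hx] using this

theorem isCutCover_singleton (hα : 2 < Nat.card α) (G : SimpleGraph α)
    (u : α) : IsCutCover G {u} {u} := by
  refine ⟨isVertexCover_between_left G {u}, fun v hv ↦ by simpa using hv.symm, fun v hv ↦ ?_⟩
  have := Set.ncard_add_ncard_compl ({u} : Set α)
  rw [hv, Set.ncard_singleton, Set.ncard_singleton] at this
  omega

end CutCover

theorem exists_isCutCover_ncard_le {α : Type} [Fintype α] (hα : 2 < Nat.card α)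
    (G : SimpleGraph α) (S : Set α) :
    ∃ C, IsCutCover G S C ∧ C.ncard ≤ max 1 (mm G S) := by
  by_cases hS : ∃ u, S = {u}
  · obtain ⟨u, rfl⟩ := hS
    exact ⟨{u}, isCutCover_singleton hα G u, by simp⟩
  by_cases hS' : ∃ u, Sᶜ = {u}
  · obtain ⟨u, hu⟩ := hS'
    exact ⟨{u}, isCutCover_compl.1 (hu ▸ isCutCover_singleton hα G u), by simp⟩
  · obtain ⟨C, hC, hle⟩ := exists_isVertexCover_ncard_le_mm G S
    exact ⟨C, ⟨hC, fun u hu ↦ absurd ⟨u, hu⟩ hS, fun u hu ↦ absurd ⟨u, hu⟩ hS'⟩,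
      hle.trans (le_max_right _ _)⟩

/-! ### From branch-decompositions to subtrees -/

section SubtreeTowardsVertex

variable {V : Type*} {T : SimpleGraph V} {a b ℓ : V} {H : T.Subgraph}

theorem edgeSide_eq_singleton (ha : (T.neighborSet a).ncard = 1) (hab : T.Adj a b) :
    edgeSide T a b = {a} := by
  obtain ⟨b', hb'⟩ := Set.ncard_eq_one.1 ha
  have hleaf (y : V) (hay : T.Adj a y) : y = b' := hb'.subset hay
  refine Set.Subset.antisymm (edgeSide_subset rfl ?_)
    (Set.singleton_subset_iff.2 (left_mem_edgeSide T a b))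
  rintro x y hxy hne rfl
  exact absurd (by rw [hleaf y hxy, hleaf b hab]) hne

theorem exists_adj_edgeSide_eq_singleton (ha : (T.neighborSet a).ncard = 1) :
    ∃ b, T.Adj a b ∧ edgeSide T a b = {a} := by
  obtain ⟨b, hab⟩ := Set.nonempty_of_ncard_ne_zero (ha ▸ one_ne_zero)
  exact ⟨b, hab, edgeSide_eq_singleton ha hab⟩

theorem exists_walk_toSubgraph_le_of_mem_edgeSide [Finite V] (hT : T.IsTree) (hℓ : ℓ ∈ H.verts)
    (hH : ∀ a b c, H.Adj a b → T.Adj c a → c ≠ b → ℓ ∈ edgeSide T c a → H.Adj c a)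
    (hab : H.Adj a b) (hside : ℓ ∈ edgeSide T a b) : ∃ p : T.Walk a ℓ, p.toSubgraph ≤ H := by
  refine edgeSide_induction hT.isAcyclic (P := fun a b ↦ H.Adj a b → ℓ ∈ edgeSide T a b →
    ∃ p : T.Walk a ℓ, p.toSubgraph ≤ H) (fun a b hadj ih hab hside ↦ ?_) hab.adj_sub hab hside
  obtain rfl | hne := eq_or_ne ℓ a
  · exact ⟨.nil, by simpa using hℓ⟩
  obtain ⟨c, hca, hcb, hℓc⟩ := exists_adj_ne_mem_edgeSide hT hadj hside hne
  have hHca : H.Adj c a := hH a b c hab hca hcb hℓc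
  obtain ⟨p, hp⟩ := ih c hca hcb hHca hℓc
  exact ⟨.cons hca.symm p, sup_le (subgraphOfAdj_le_of_adj H hHca.symm) hp⟩

theorem connected_of_forall_adj_towards [Finite V] (hT : T.IsTree) (hℓ : ℓ ∈ H.verts)
    (hverts : ∀ a ∈ H.verts, ∃ b, H.Adj a b)
    (hH : ∀ a b c, H.Adj a b → T.Adj c a → c ≠ b → ℓ ∈ edgeSide T c a → H.Adj c a) :
    H.Connected := by
  have hwalk (a : V) (ha : a ∈ H.verts) : ∃ p : T.Walk a ℓ, p.toSubgraph ≤ H := by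
    obtain ⟨b, hab⟩ := hverts a ha
    by_cases hside : ℓ ∈ edgeSide T a b
    · exact exists_walk_toSubgraph_le_of_mem_edgeSide hT hℓ hH hab hside
    · rw [← Set.mem_compl_iff, compl_edgeSide hT hab.adj_sub] at hside
      obtain ⟨p, hp⟩ := exists_walk_toSubgraph_le_of_mem_edgeSide hT hℓ hH hab.symm hside
      exact ⟨.cons hab.adj_sub p, sup_le (subgraphOfAdj_le_of_adj H hab) hp⟩
  refine (Subgraph.connected_iff_forall_exists_walk_subgraph H).2 ⟨⟨ℓ, hℓ⟩, fun ha hb ↦ ?_⟩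
  obtain ⟨p, hp⟩ := hwalk _ ha
  obtain ⟨q, hq⟩ := hwalk _ hb
  exact ⟨p.append q.reverse, by
    rw [Walk.toSubgraph_append, Walk.toSubgraph_reverse]; exact sup_le hp hq⟩

end SubtreeTowardsVertex

section CoverSubgraph

variable {V α : Type*} {T : SimpleGraph V} {G : SimpleGraph α} {C : Set α → Set α}
  {a b : V} {u v : α}

/-- The subtree assigned to the vertex `u` of `G`: it consists of the edges of `T` for which `u`
belongs to the chosen cover of the induced cut. -/
def coverSubgraph (hT : T.IsTree) (L : α → V) (hC : IsCoherentCover G C) (u : α) :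
    T.Subgraph where
  verts := {a | ∃ b, T.Adj a b ∧ u ∈ C (L ⁻¹' edgeSide T a b)}
  Adj a b := T.Adj a b ∧ u ∈ C (L ⁻¹' edgeSide T a b)
  adj_sub h := h.1
  edge_vert h := ⟨_, h⟩
  symm := ⟨fun a b h ↦ ⟨h.1.symm, by
    rw [← compl_edgeSide hT h.1, Set.preimage_compl, hC.compl]; exact h.2⟩⟩

variable (hT : T.IsTree) {L : α → V} (hC : IsCoherentCover G C)

theorem setOf_mem_edgeSet_coverSubgraph (hab : T.Adj a b) :
    {u | s(a, b) ∈ (coverSubgraph hT L hC u).edgeSet} = C (L ⁻¹' edgeSide T a b) :=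
  Set.ext fun _ ↦ and_iff_right hab

theorem exists_adj_coverSubgraph (hL : L.Injective) (hu : (T.neighborSet (L u)).ncard = 1) :
    ∃ w, (coverSubgraph hT L hC u).Adj (L u) w := by
  obtain ⟨w, hw, hside⟩ := exists_adj_edgeSide_eq_singleton hu
  refine ⟨w, hw, (hC.isCutCover _).mem_of_eq_singleton u ?_⟩
  rw [hside, ← Set.image_singleton, hL.preimage_image]

variable [Finite V]

theorem connected_coverSubgraph (hL : L.Injective) (hu : (T.neighborSet (L u)).ncard = 1) :
    (coverSubgraph hT L hC u).Connected := by
  obtain ⟨w, hw⟩ := exists_adj_coverSubgraph hT hC hL hu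
  refine connected_of_forall_adj_towards hT hw.fst_mem (fun _ ha ↦ ha) ?_
  intro a b c hab hca hcb hu'
  exact ⟨hca, hC.inter_subset _ _
    (Set.preimage_mono (edgeSide_subset_edgeSide hT.isAcyclic hca hcb)) ⟨hab.2, hu'⟩⟩

theorem nonempty_inter_verts_coverSubgraph_of_mem_edgeSide (huv : G.Adj u v) (hab : T.Adj a b)
    (hu : L u ∉ edgeSide T a b) (hv : L v ∈ edgeSide T a b)
    (hLv : L v ∈ (coverSubgraph hT L hC v).verts) (hb : b ∈ (coverSubgraph hT L hC u).verts) :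
    ((coverSubgraph hT L hC u).verts ∩ (coverSubgraph hT L hC v).verts).Nonempty := by
  refine edgeSide_induction hT.isAcyclic (P := fun a b ↦ L u ∉ edgeSide T a b →
    L v ∈ edgeSide T a b → b ∈ (coverSubgraph hT L hC u).verts →
    ((coverSubgraph hT L hC u).verts ∩ (coverSubgraph hT L hC v).verts).Nonempty)
    (fun a b hab ih hu hv hb ↦ ?_) hab hu hv hb
  rcases (hC.isCutCover (L ⁻¹' edgeSide T a b)).mem_or_mem huv.symm hv hu with hvC | huC
  · have hadj : (coverSubgraph hT L hC v).Adj a b := ⟨hab, hvC⟩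
    exact ⟨b, hb, hadj.snd_mem⟩
  have ha : a ∈ (coverSubgraph hT L hC u).verts := ⟨b, hab, huC⟩
  obtain hva | hva := eq_or_ne (L v) a
  · exact ⟨a, ha, hva ▸ hLv⟩
  obtain ⟨c, hca, hcb, hvc⟩ := exists_adj_ne_mem_edgeSide hT hab hv hva
  exact ih c hca hcb (fun h ↦ hu (edgeSide_subset_edgeSide hT.isAcyclic hca hcb h)) hvc ha

theorem nonempty_inter_verts_coverSubgraph (hL : L.Injective)
    (hleaf : ∀ u, (T.neighborSet (L u)).ncard = 1) (huv : G.Adj u v) :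
    ((coverSubgraph hT L hC u).verts ∩ (coverSubgraph hT L hC v).verts).Nonempty := by
  obtain ⟨w, hw⟩ := exists_adj_coverSubgraph hT hC hL (hleaf u)
  obtain ⟨w', hw'⟩ := exists_adj_coverSubgraph hT hC hL (hleaf v)
  obtain ⟨c, hc, hvc⟩ := exists_adj_mem_edgeSide hT.connected (hL.ne huv.ne')
  exact nonempty_inter_verts_coverSubgraph_of_mem_edgeSide hT hC huv hc
    (right_notMem_edgeSide hT.isAcyclic hc) hvc hw'.fst_mem hw.fst_mem

end CoverSubgraph

/-- A representation of `G` by nontrivial subtrees of a finite ternary tree in which the subtrees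
of adjacent vertices meet and every tree edge lies in at most `k` subtrees. -/
def HasTreeRepresentation {α : Type*} (G : SimpleGraph α) (k : ℕ) : Prop :=
  ∃ (V : Type) (_ : Fintype V) (T : SimpleGraph V), T.IsTree ∧
    (∀ v : V, (T.neighborSet v).ncard = 1 ∨ (T.neighborSet v).ncard = 3) ∧
    ∃ f : α → T.Subgraph,
      (∀ u : α, (f u).Connected) ∧
      (∀ u : α, (f u).edgeSet.Nonempty) ∧
      (∀ u v : α, G.Adj u v → ((f u).verts ∩ (f v).verts).Nonempty) ∧
      (∀ e ∈ T.edgeSet, {u : α | e ∈ (f u).edgeSet}.ncard ≤ k)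

theorem HasBranchDecomposition.hasTreeRepresentation {α : Type*} {G : SimpleGraph α}
    {C : Set α → Set α} {k : ℕ} (hC : IsCoherentCover G C)
    (h : HasBranchDecomposition fun S ↦ (C S).ncard ≤ k) : HasTreeRepresentation G k := by
  obtain ⟨V, _, T, hT, hdeg, L, hk⟩ := h
  have hL : Function.Injective fun u ↦ (L u : V) := Subtype.val_injective.comp L.injective
  refine ⟨V, inferInstance, T, hT, hdeg, coverSubgraph hT (fun u ↦ (L u : V)) hC,
    fun u ↦ connected_coverSubgraph hT hC hL (L u).2, fun u ↦ ?_,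
    fun u v huv ↦ nonempty_inter_verts_coverSubgraph hT hC hL (fun u ↦ (L u).2) huv,
    Sym2.ind fun a b hab ↦ ?_⟩
  · obtain ⟨w, hw⟩ := exists_adj_coverSubgraph hT hC hL (L u).2
    exact ⟨s(_, w), hw⟩
  · rw [setOf_mem_edgeSet_coverSubgraph hT hC hab]
    exact hk a b hab

theorem ncard_neighborSet_starGraph_eq_one_or_three (v : Option (Fin 3)) :
    ((starGraph none).neighborSet v).ncard = 1 ∨ ((starGraph none).neighborSet v).ncard = 3 := by
  have hdeg : ((starGraph none).neighborSet v).ncard = (starGraph none).degree v :=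
    Set.ncard_eq_toFinset_card' _
  rcases v with _ | i
  · exact .inr (hdeg.trans degree_starGraph_center)
  · exact .inl (hdeg.trans (degree_starGraph_of_ne_center (by simp)))

theorem hasTreeRepresentation_of_card_le_three {α : Type*} [Finite α] (G : SimpleGraph α)
    (hα : Nat.card α ≤ 3) {k : ℕ} (hk : 1 ≤ k) : HasTreeRepresentation G k := by
  have := Fintype.ofFinite α
  obtain ⟨i⟩ : Nonempty (α ↪ Fin 3) :=
    Function.Embedding.nonempty_of_card_le
      (by simpa only [← Nat.card_eq_fintype_card, Nat.card_fin] using hα)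
  have hadj (u : α) : (starGraph (none : Option (Fin 3))).Adj none (some (i u)) := by simp
  refine ⟨Option (Fin 3), inferInstance, starGraph none, isTree_starGraph none,
    ncard_neighborSet_starGraph_eq_one_or_three, fun u ↦ subgraphOfAdj _ (hadj u),
    fun u ↦ Subgraph.subgraphOfAdj_connected (hadj u), fun u ↦ by simp,
    fun u v _ ↦ ⟨none, by simp⟩, fun e _ ↦ (Set.ncard_le_one_iff_subsingleton.2 ?_).trans hk⟩
  intro u hu v hv
  simp only [edgeSet_subgraphOfAdj, Set.mem_singleton_iff, Set.mem_ofPred_eq] at hu hv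
  simpa using hu.symm.trans hv

theorem HasBranchDecomposition.prop_singleton {α : Type*} {F : Set α → Prop}
    (h : HasBranchDecomposition F) (x : α) : F {x} := by
  obtain ⟨V, _, T, -, -, L, hL⟩ := h
  obtain ⟨b, hb, hside⟩ := exists_adj_edgeSide_eq_singleton (L x).2
  have hcut : {y | (L y : V) ∈ edgeSide T (L x) b} = {x} := by
    ext y
    rw [hside]
    simp [Subtype.coe_inj]
  exact hcut ▸ hL _ b hb

theorem hasTreeRepresentation_of_hasBranchDecomposition_mm {α : Type} [Fintype α]
    {G : SimpleGraph α} {x y : α} (hxy : G.Adj x y) {k : ℕ}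
    (h : HasBranchDecomposition (mm G · ≤ k)) : HasTreeRepresentation G k := by
  have hk : 1 ≤ k := (one_le_mm_singleton hxy).trans (h.prop_singleton x)
  rcases le_or_gt (Nat.card α) 2 with hα | hα
  -- On two vertices the only cut has two singleton parts, so its cut covers are too large.
  · exact hasTreeRepresentation_of_card_le_three G (by omega) hk
  · have : Nonempty α := ⟨x⟩
    obtain ⟨C, hC, hmin⟩ := exists_isCoherentCover_minimum G
    refine HasBranchDecomposition.hasTreeRepresentation hC (h.imp fun S hS ↦ ?_)
    obtain ⟨D, hD, hle⟩ := exists_isCutCover_ncard_le hα G S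
    exact (hmin S D hD).trans (hle.trans (max_le hk hS))

/-! ### From subtrees to branch-decompositions -/

section EdgeAssignment

variable {V α : Type*} {T : SimpleGraph V} {e : α → Sym2 V} {a b c d : V}

/-- The elements of `α` whose edge `e x` has at least one endpoint on the side of `a`. -/
def labelsTouching (T : SimpleGraph V) (e : α → Sym2 V) (a b : V) : Set α :=
  {x | ∃ w ∈ e x, w ∈ edgeSide T a b}

/-- The elements of `α` whose edge `e x` has both endpoints on the side of `a`. If `e` takes values
in the edges of a tree, this differs from `labelsTouching T e a b` only in those `x` with
`e x = s(a, b)`. -/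
def labelsWithin (T : SimpleGraph V) (e : α → Sym2 V) (a b : V) : Set α :=
  {x | ∀ w ∈ e x, w ∈ edgeSide T a b}

theorem labelsWithin_subset_labelsTouching (T : SimpleGraph V) (e : α → Sym2 V) (a b : V) :
    labelsWithin T e a b ⊆ labelsTouching T e a b := fun x hx ↦
  ⟨(e x).out.1, (e x).out_fst_mem, hx _ (e x).out_fst_mem⟩

theorem compl_labelsTouching (hT : T.IsTree) (hab : T.Adj a b) :
    (labelsTouching T e a b)ᶜ = labelsWithin T e b a := by
  ext x
  simp [labelsTouching, labelsWithin, ← compl_edgeSide hT hab]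

theorem labelsTouching_subset_labelsWithin (hT : T.IsAcyclic) (he : ∀ x, e x ∈ T.edgeSet)
    (hca : T.Adj c a) (hcb : c ≠ b) : labelsTouching T e c a ⊆ labelsWithin T e a b := by
  rintro x ⟨w, hw, hwc⟩ w' hw'
  have hsub : edgeSide T c a ⊆ edgeSide T a b := edgeSide_subset_edgeSide hT hca hcb
  obtain rfl | hne := eq_or_ne w w'
  · exact hsub hwc
  have hx : e x = s(w, w') := (Sym2.mem_and_mem_iff hne).1 ⟨hw, hw'⟩
  have hadj : T.Adj w w' := by simpa [hx] using he x
  by_cases heq : s(w, w') = s(c, a)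
  · rcases Sym2.eq_iff.1 heq with ⟨-, rfl⟩ | ⟨-, rfl⟩
    exacts [left_mem_edgeSide T w' b, hsub (left_mem_edgeSide T w' a)]
  · exact hsub (mem_edgeSide_of_adj hadj heq hwc)

theorem disjoint_labelsTouching (hT : T.IsTree) (he : ∀ x, e x ∈ T.edgeSet) (hca : T.Adj c a)
    (hda : T.Adj d a) (hcd : c ≠ d) :
    Disjoint (labelsTouching T e c a) (labelsTouching T e d a) := by
  rw [← Set.subset_compl_iff_disjoint_right, compl_labelsTouching hT hda]
  exact labelsTouching_subset_labelsWithin hT.isAcyclic he hca hcd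

theorem labelsWithin_eq_biUnion_labelsTouching (hT : T.IsTree) (he : ∀ x, e x ∈ T.edgeSet)
    (hab : T.Adj a b) :
    labelsWithin T e a b = ⋃ c ∈ T.neighborSet a \ {b}, labelsTouching T e c a := by
  apply Set.Subset.antisymm
  · intro x hx
    obtain ⟨w, hw, hwa⟩ : ∃ w ∈ e x, w ≠ a := by
      by_cases ha : a ∈ e x
      · exact ⟨_, Sym2.other_mem ha, Sym2.other_ne (T.not_isDiag_of_mem_edgeSet (he x)) ha⟩
      · exact ⟨_, (e x).out_fst_mem, fun h ↦ ha (h ▸ (e x).out_fst_mem)⟩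
    obtain ⟨c, hca, hcb, hwc⟩ := exists_adj_ne_mem_edgeSide hT hab (hx w hw) hwa
    exact Set.mem_biUnion ⟨hca.symm, hcb⟩ ⟨w, hw, hwc⟩
  · exact Set.iUnion₂_subset fun c hc ↦
      labelsTouching_subset_labelsWithin hT.isAcyclic he hc.1.symm hc.2

variable [Finite V] [Finite α] {F : Set α → Prop}

theorem isBranching_labelsWithin (hT : T.IsTree)
    (hdeg : ∀ v, (T.neighborSet v).ncard = 1 ∨ (T.neighborSet v).ncard = 3)
    (he : ∀ x, e x ∈ T.edgeSet) (hF₁ : ∀ x, F {x})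
    (hF : ∀ a b, T.Adj a b → ∀ W, labelsWithin T e a b ⊆ W → W ⊆ labelsTouching T e a b → F W)
    (hab : T.Adj a b) : IsBranching F (labelsWithin T e a b) := by
  refine edgeSide_induction hT.isAcyclic (P := fun a b ↦ IsBranching F (labelsWithin T e a b))
    (fun a b hab ih ↦ ?_) hab
  have htouching (c : V) (hca : T.Adj c a) (hcb : c ≠ b) : IsBranching F (labelsTouching T e c a) :=
    (ih c hca hcb).mono (labelsWithin_subset_labelsTouching T e c a) hF₁ (hF c a hca)
  have hFwithin := hF a b hab _ subset_rfl (labelsWithin_subset_labelsTouching T e a b)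
  have hchildren : (T.neighborSet a \ {b}).ncard = (T.neighborSet a).ncard - 1 :=
    Set.ncard_sdiff_singleton_of_mem hab
  rw [labelsWithin_eq_biUnion_labelsTouching hT he hab] at hFwithin ⊢
  rcases hdeg a with ha | ha <;> rw [ha] at hchildren
  · rw [(Set.ncard_eq_zero (Set.toFinite _)).1 hchildren, Set.biUnion_empty]
    exact .empty
  · obtain ⟨c, d, hcd, hcd'⟩ := Set.ncard_eq_two.1 hchildren
    obtain ⟨hca, hcb⟩ : c ∈ T.neighborSet a \ {b} := hcd' ▸ .inl rfl
    obtain ⟨hda, hdb⟩ : d ∈ T.neighborSet a \ {b} := hcd' ▸ .inr rfl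
    rw [hcd', Set.biUnion_pair] at hFwithin ⊢
    exact (htouching c hca.symm hcb).union (htouching d hda.symm hdb)
      (disjoint_labelsTouching hT he hca.symm hda.symm hcd) hFwithin

theorem isBranching_univ (hT : T.IsTree)
    (hdeg : ∀ v, (T.neighborSet v).ncard = 1 ∨ (T.neighborSet v).ncard = 3)
    (he : ∀ x, e x ∈ T.edgeSet) (hF₁ : ∀ x, F {x}) (hFuniv : F .univ)
    (hF : ∀ a b, T.Adj a b → ∀ W, labelsWithin T e a b ⊆ W → W ⊆ labelsTouching T e a b → F W) :
    IsBranching F .univ := by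
  obtain ⟨a⟩ := hT.connected.nonempty
  obtain ⟨b, hab⟩ : (T.neighborSet a).Nonempty :=
    Set.nonempty_of_ncard_ne_zero (by have := hdeg a; omega)
  have hside : IsBranching F (labelsTouching T e a b) :=
    (isBranching_labelsWithin hT hdeg he hF₁ hF hab).mono
      (labelsWithin_subset_labelsTouching T e a b) hF₁ (hF a b hab)
  have hother : IsBranching F (labelsWithin T e b a) :=
    isBranching_labelsWithin hT hdeg he hF₁ hF hab.symm
  rw [← compl_labelsTouching hT hab] at hother
  rw [← Set.union_compl_self (labelsTouching T e a b)] at hFuniv ⊢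
  exact hside.union hother disjoint_compl_right hFuniv

end EdgeAssignment

section CutOfSubtrees

variable {V α : Type*} {T : SimpleGraph V} {G : SimpleGraph α} {e : α → Sym2 V} {a b x : V}
  {W : Set α}

theorem verts_subset_edgeSide {H : T.Subgraph} (hH : H.Connected) (hab : s(a, b) ∉ H.edgeSet)
    (hxH : x ∈ H.verts) (hx : x ∈ edgeSide T a b) : H.verts ⊆ edgeSide T a b := by
  intro y hyH
  refine mem_of_reachable_of_adj_closed (W := {z : H.verts | (z : V) ∈ edgeSide T a b})
    (fun z z' hzz' hz ↦ ?_) (hH.coe.preconnected ⟨x, hxH⟩ ⟨y, hyH⟩) hx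
  have hadj : H.Adj z z' := hzz'
  exact mem_edgeSide_of_adj hadj.adj_sub (fun heq ↦ hab (heq ▸ hadj)) hz

theorem isVertexCover_setOf_mem_edgeSet {f : α → T.Subgraph} (hconn : ∀ u, (f u).Connected)
    (hmeet : ∀ u v, G.Adj u v → ((f u).verts ∩ (f v).verts).Nonempty)
    (he : ∀ u, e u ∈ (f u).edgeSet) (hwithin : labelsWithin T e a b ⊆ W)
    (htouching : W ⊆ labelsTouching T e a b) :
    (G.between W Wᶜ).IsVertexCover {u | s(a, b) ∈ (f u).edgeSet} := by
  have hmem {u : α} {w : V} : w ∈ e u → w ∈ (f u).verts := Subgraph.mem_verts_of_mem_edge (he u)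
  refine isVertexCover_between_iff.2 fun u v huv hu hv ↦ ?_
  by_contra! h
  obtain ⟨w, hw, hwa⟩ := htouching hu
  obtain ⟨z, hzu, hzv⟩ := hmeet u v huv
  have hz : z ∈ edgeSide T a b := verts_subset_edgeSide (hconn u) h.1 (hmem hw) hwa hzu
  exact hv (hwithin fun w' hw' ↦ verts_subset_edgeSide (hconn v) h.2 hzv hz (hmem hw'))

end CutOfSubtrees

theorem HasTreeRepresentation.hasBranchDecomposition_mm {α : Type} [Fintype α] [Nontrivial α]
    {G : SimpleGraph α} {k : ℕ} (h : HasTreeRepresentation G k) :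
    HasBranchDecomposition (mm G · ≤ k) := by
  obtain ⟨V, _, T, hT, hdeg, f, hconn, hne, hmeet, hk⟩ := h
  choose e he using hne
  have heT (u : α) : e u ∈ T.edgeSet := (f u).edgeSet_subset (he u)
  have hk₁ (u : α) : 1 ≤ k :=
    ((Set.ncard_pos (Set.toFinite {v | e u ∈ (f v).edgeSet})).2 ⟨u, he u⟩).trans_le (hk _ (heT u))
  have hsingleton (u : α) : mm G {u} ≤ k :=
    (mm_le_ncard (isVertexCover_between_left G {u})).trans
      ((Set.ncard_singleton u).trans_le (hk₁ u))
  have huniv : mm G .univ ≤ k := by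
    rw [← Set.compl_empty, mm_compl]
    exact (mm_le_ncard (isVertexCover_between_left G ∅)).trans (by simp)
  refine (isBranching_univ hT hdeg heT hsingleton huniv
    fun a b hab W hwithin htouching ↦ ?_).hasBranchDecomposition
      fun S hS ↦ (mm_compl G S).trans_le hS
  exact (mm_le_ncard (isVertexCover_setOf_mem_edgeSet hconn hmeet he hwithin htouching)).trans
    (hk _ hab)

/-- A finite simple graph `G` with at least one edge satisfies `mmw G ≤ k` if and only if
there exist a finite ternary tree `T` and nontrivial subtrees `T_u = f u` of `T` for all
`u ∈ V(G)` such that (1) if `uv ∈ E(G)` then `T_u` and `T_v` share at least one vertex of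
`T`, and (2) every edge of `T` belongs to at most `k` of the subtrees. -/
theorem mmw_le_iff_tree_representation {α : Type} [Fintype α] (G : SimpleGraph α)
    (hG : G.edgeSet.Nonempty) (k : ℕ) :
    mmw G ≤ k ↔
      ∃ (V : Type) (_ : Fintype V) (T : SimpleGraph V), T.IsTree ∧
        (∀ v : V, (T.neighborSet v).ncard = 1 ∨ (T.neighborSet v).ncard = 3) ∧
        ∃ f : α → T.Subgraph,
          (∀ u : α, (f u).Connected) ∧
          (∀ u : α, (f u).edgeSet.Nonempty) ∧
          (∀ u v : α, G.Adj u v → ((f u).verts ∩ (f v).verts).Nonempty) ∧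
          (∀ e ∈ T.edgeSet, {u : α | e ∈ (f u).edgeSet}.ncard ≤ k) := by
  obtain ⟨⟨x, y⟩, hxy : G.Adj x y⟩ := hG
  have : Nontrivial α := ⟨x, y, hxy.ne⟩
  rw [mmw_le_iff_hasBranchDecomposition]
  exact ⟨hasTreeRepresentation_of_hasBranchDecomposition_mm hxy,
    HasTreeRepresentation.hasBranchDecomposition_mm⟩
end

section
/- Let G be a split graph with clique part C = C(G) of size 3k, k ≥ 1, and suppose (T, {T_x}_{x∈V(G)}) is a tree-representation of G in which every edge of T belongs to at most k of the subtrees T_x. Then C can be partitioned into three subsets C_1, C_2, C_3, each of size k, such that for each vertex w in the independent part I(G), the neighborhood N_G(w) is contained in one of C_1, C_2, C_3. -/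
/-!
By the Helly property of subtrees, all subtrees of clique vertices share a vertex `v` of `T`. Each
of them is nontrivial, so it uses an edge at `v`; there are at most three such edges, each used by
at most `k` subtrees, while the clique has `3k` vertices. Hence `v` has degree three and the sets
of subtrees using the edges at `v` partition the clique into three classes of size `k`. No edge at
`v` has room for the subtree of an independent vertex `w`, which therefore avoids `v`. Any subtree
through `v` that meets it must leave `v` along the edge pointing towards it, so all the neighbours
of `w` lie in the class of that edge.
-/

open SimpleGraph Function

section Counting

variable {α ι : Type*} [Fintype ι] {A : ι → Set α}

theorem pairwise_disjoint_of_sum_ncard_le_ncard_iUnion (hfin : ∀ i, (A i).Finite)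
    (hcard : ∑ i, (A i).ncard ≤ (⋃ i, A i).ncard) : Pairwise (Disjoint on A) := by
  have (i : ι) : Finite (A i) := hfin i
  have hinj : Injective (Set.sigmaToiUnion A) := by
    refine ((Set.sigmaToiUnion_surjective A).bijective_of_nat_card_le ?_).injective
    rwa [Nat.card_sigma]
  intro i j hij
  refine Set.disjoint_left.mpr fun x hxi hxj ↦ hij ?_
  exact congrArg Sigma.fst (@hinj ⟨i, x, hxi⟩ ⟨j, x, hxj⟩ rfl)

theorem partition_of_card_mul_le_ncard {s : Set α} {k : ℕ} (hfin : ∀ i, (A i).Finite)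
    (hle : ∀ i, (A i).ncard ≤ k) (hs : s ⊆ ⋃ i, A i) (hcard : Fintype.card ι * k ≤ s.ncard) :
    Pairwise (Disjoint on A) ∧ ⋃ i, A i = s ∧ ∀ i, (A i).ncard = k := by
  have hUfin : (⋃ i, A i).Finite := Set.finite_iUnion hfin
  have hsU : s.ncard ≤ (⋃ i, A i).ncard := Set.ncard_le_ncard hs hUfin
  have hUsum : (⋃ i, A i).ncard ≤ ∑ i, (A i).ncard := Set.ncard_iUnion_le_of_fintype A
  have hsumk : ∑ i, (A i).ncard ≤ ∑ _i : ι, k := Finset.sum_le_sum fun i _ ↦ hle i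
  have hksum : ∑ _i : ι, k = Fintype.card ι * k := by simp
  refine ⟨pairwise_disjoint_of_sum_ncard_le_ncard_iUnion hfin (by omega),
    (Set.eq_of_subset_of_ncard_le hs (by omega) hUfin).symm, fun i ↦ ?_⟩
  have hsum_eq : ∑ i, (A i).ncard = ∑ _i : ι, k := by omega
  exact (Finset.sum_eq_sum_iff_of_le fun i _ ↦ hle i).mp hsum_eq i (Finset.mem_univ i)

theorem exists_partition_fin_of_encard_eq_mul {κ : Type*} {B : κ → Set α} {s : Set α} {d k : ℕ}
    (hκ : ENat.card κ ≤ d) (hle : ∀ i, (B i).encard ≤ k) (hs : s ⊆ ⋃ i, B i)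
    (hcard : s.encard = d * k) :
    ∃ C : Fin d → Set α, Pairwise (Disjoint on C) ∧ ⋃ j, C j = s ∧ (∀ j, (C j).ncard = k) ∧
      ∀ i, ∃ j, C j = B i := by
  have : Finite κ := ENat.card_lt_top.mp (hκ.trans_lt (ENat.natCast_lt_top d))
  obtain ⟨e⟩ : Nonempty (κ ↪ Fin d) := by
    have := Fintype.ofFinite κ
    exact Embedding.nonempty_of_card_le (by simpa using hκ)
  -- A label missed by `e` gets the empty class; the count below allows this only if `k = 0`.
  let C : Fin d → Set α := extend e B ⊥
  have hCe (i : κ) : C (e i) = B i := e.injective.extend_apply B ⊥ i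
  have hCle (j : Fin d) : (C j).Finite ∧ (C j).ncard ≤ k := by
    rw [← Set.encard_le_coe_iff_finite_ncard_le]
    by_cases hj : ∃ i, e i = j
    · obtain ⟨i, rfl⟩ := hj
      exact hCe i ▸ hle i
    · simp [C, extend_apply' B ⊥ j hj]
  have hsC : s ⊆ ⋃ j, C j := hs.trans (Set.iUnion_subset fun i ↦ hCe i ▸ Set.subset_iUnion C (e i))
  have hcardC : Fintype.card (Fin d) * k ≤ s.ncard := by
    simp [Set.ncard, hcard]
  obtain ⟨hdisj, hunion, hncard⟩ :=
    partition_of_card_mul_le_ncard (fun j ↦ (hCle j).1) (fun j ↦ (hCle j).2) hsC hcardC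
  exact ⟨C, hdisj, hunion, hncard, fun i ↦ ⟨e i, hCe i⟩⟩

end Counting

section Subtrees

variable {V : Type*} {T : SimpleGraph V} {H K : T.Subgraph} {u v : V}

theorem exists_adj_of_preconnected_of_edgeSet_nonempty (hH : H.Preconnected)
    (hne : H.edgeSet.Nonempty) (hv : v ∈ H.verts) : ∃ n, H.Adj v n := by
  obtain ⟨⟨a, b⟩, hab : H.Adj a b⟩ := hne
  have : Nontrivial H.verts := ⟨⟨a, hab.fst_mem⟩, ⟨b, hab.snd_mem⟩, by simpa using hab.ne⟩
  exact hH.exists_adj_of_nontrivial ⟨v, hv⟩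

theorem toSubgraph_le_of_isPath (hT : T.IsAcyclic) (hH : H.Preconnected) (hu : u ∈ H.verts)
    (hv : v ∈ H.verts) {p : T.Walk u v} (hp : p.IsPath) : p.toSubgraph ≤ H := by
  classical
  obtain ⟨q, hq⟩ := H.preconnected_iff_forall_exists_walk_subgraph.mp hH hu hv
  have hpq : p = q.bypass := congrArg Subtype.val ((hT.subsingleton_path u v).elim ⟨p, hp⟩ q.toPath)
  exact hpq ▸ Walk.toSubgraph_bypass_le_toSubgraph.trans hq

/-- `u` is the gate of the subgraph `K` seen from `v`: a vertex of `K` that every walk from `v` to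
a vertex of `K` visits. In a tree it is the vertex of `K` nearest to `v`. -/
def IsGate (K : T.Subgraph) (v u : V) : Prop :=
  u ∈ K.verts ∧ ∀ t ∈ K.verts, ∀ p : T.Walk v t, u ∈ p.support

theorem IsGate.mem_verts_of_inter_nonempty (hu : IsGate K v u) (hH : H.Preconnected)
    (hv : v ∈ H.verts) (hne : (H.verts ∩ K.verts).Nonempty) : u ∈ H.verts := by
  obtain ⟨t, htH, htK⟩ := hne
  obtain ⟨p, hp⟩ := H.preconnected_iff_forall_exists_walk_subgraph.mp hH hv htH
  exact hp.1 (p.mem_verts_toSubgraph.mpr (hu.2 t htK p))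

theorem exists_walk_forall_mem_support_eq_end (hT : T.Connected) {S : Set V} (hS : S.Nonempty)
    (v : V) : ∃ u ∈ S, ∃ p : T.Walk v u, ∀ y ∈ p.support, y ∈ S → y = u := by
  classical
  obtain ⟨u, huS, hmin⟩ := exists_minimalFor_of_wellFoundedLT (· ∈ S) (T.dist v) hS
  obtain ⟨p, hp⟩ := hT.exists_walk_length_eq_dist v u
  refine ⟨u, huS, p, fun y hy hyS ↦ ?_⟩
  by_contra hyu
  have hlt : T.dist v y < T.dist v u :=
    calc T.dist v y ≤ (p.takeUntil y hy).length := dist_le _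
      _ < p.length := p.length_takeUntil_lt_length hy hyu
      _ = T.dist v u := hp
  exact hlt.not_ge (hmin hyS hlt.le)

theorem exists_isGate (hT : T.IsTree) (hK : K.Connected) (v : V) : ∃ u, IsGate K v u := by
  obtain ⟨u, huK, p, hp⟩ := exists_walk_forall_mem_support_eq_end hT.connected hK.nonempty v
  refine ⟨u, huK, fun t htK q ↦ ?_⟩
  -- The path from `u` to `t` runs inside both `K` and the union of `p` and `q`; since `p` meets `K`
  -- only in `u`, its first edge lies on `q`.
  by_cases hut : u = t
  · exact hut ▸ q.end_mem_support
  obtain ⟨r, hr⟩ := hT.connected.exists_isPath u t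
  have hadj : r.toSubgraph.Adj u r.snd := r.toSubgraph_adj_snd (Walk.not_nil_of_ne hut)
  have hadjK : K.Adj u r.snd :=
    (toSubgraph_le_of_isPath hT.isAcyclic hK.preconnected huK htK hr).2 hadj
  have hpq : (p.toSubgraph ⊔ q.toSubgraph).Connected :=
    Subgraph.connected_sup p.toSubgraph_connected.preconnected q.toSubgraph_connected.preconnected
      ⟨v, p.start_mem_verts_toSubgraph, q.start_mem_verts_toSubgraph⟩
  have hr_le : r.toSubgraph ≤ p.toSubgraph ⊔ q.toSubgraph :=
    toSubgraph_le_of_isPath hT.isAcyclic hpq.preconnected (.inl p.end_mem_verts_toSubgraph)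
      (.inr q.end_mem_verts_toSubgraph) hr
  rcases hr_le.2 hadj with hadjp | hadjq
  · have hsnd : r.snd = u := hp _ (p.mem_verts_toSubgraph.mp hadjp.snd_mem) hadjK.snd_mem
    exact absurd hsnd hadjp.adj_sub.ne'
  · exact q.mem_verts_toSubgraph.mp hadjq.fst_mem

theorem exists_common_vertex_of_pairwise_inter_nonempty {ι : Type*} (hT : T.IsTree)
    {f : ι → T.Subgraph} {S : Set ι} (hS : S.Finite) (hconn : ∀ x ∈ S, (f x).Connected)
    (hmeet : S.Pairwise fun x y ↦ ((f x).verts ∩ (f y).verts).Nonempty) :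
    ∃ v, ∀ x ∈ S, v ∈ (f x).verts := by
  induction S, hS using Set.Finite.induction_on with
  | empty => exact hT.connected.nonempty.elim fun v ↦ ⟨v, by simp⟩
  | @insert a S haS _ ih =>
    obtain ⟨v, hv⟩ := ih (fun x hx ↦ hconn x (.inr hx)) (hmeet.mono (Set.subset_insert a S))
    obtain ⟨u, hu⟩ := exists_isGate hT (hconn a (.inl rfl)) v
    refine ⟨u, ?_⟩
    rintro x (rfl | hx)
    · exact hu.1
    · exact hu.mem_verts_of_inter_nonempty (hconn x (.inr hx)).preconnected (hv x hx)
        (hmeet (.inr hx) (.inl rfl) (ne_of_mem_of_not_mem hx haS))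

theorem exists_adj_forall_preconnected_adj (hT : T.IsTree) (hK : K.Connected) (hv : v ∉ K.verts) :
    ∃ n, T.Adj v n ∧ ∀ H : T.Subgraph, H.Preconnected → v ∈ H.verts →
      (H.verts ∩ K.verts).Nonempty → H.Adj v n := by
  obtain ⟨u, hu⟩ := exists_isGate hT hK v
  obtain ⟨p, hp⟩ := hT.connected.exists_isPath v u
  have hadj : p.toSubgraph.Adj v p.snd :=
    p.toSubgraph_adj_snd (Walk.not_nil_of_ne (ne_of_mem_of_not_mem hu.1 hv).symm)
  refine ⟨p.snd, hadj.adj_sub, fun H hH hvH hne ↦ ?_⟩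
  have huH : u ∈ H.verts := hu.mem_verts_of_inter_nonempty hH hvH hne
  exact (toSubgraph_le_of_isPath hT.isAcyclic hH hvH huH hp).2 hadj

end Subtrees

theorem split_graph_tree_rep_partition_general {α V : Type*} (G : SimpleGraph α)
    (Cs Is : Set α) (hdisj : Disjoint Cs Is) (hcover : Cs ∪ Is = Set.univ)
    (hclique : G.IsClique Cs) (hindep : ∀ u ∈ Is, ∀ v ∈ Is, ¬ G.Adj u v)
    (d k : ℕ) (hCcard : Cs.encard = d * k)
    (T : SimpleGraph V) (hT : T.IsTree) (hdeg : ∀ v : V, (T.neighborSet v).encard ≤ d)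
    (f : α → T.Subgraph) (hconn : ∀ x : α, (f x).Connected)
    (hnontrivial : ∀ x : α, (f x).edgeSet.Nonempty)
    (hadj : ∀ u v : α, G.Adj u v → ((f u).verts ∩ (f v).verts).Nonempty)
    (hload : ∀ e ∈ T.edgeSet, {x : α | e ∈ (f x).edgeSet}.encard ≤ k) :
    ∃ C : Fin d → Set α,
      (∀ i j : Fin d, i ≠ j → Disjoint (C i) (C j)) ∧
      (⋃ i, C i) = Cs ∧
      (∀ i, (C i).ncard = k) ∧
      (∀ w ∈ Is, ∃ i : Fin d, G.neighborSet w ⊆ C i) := by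
  have hCfin : Cs.Finite := Set.finite_of_encard_eq_coe (k := d * k) (by exact_mod_cast hCcard)
  obtain ⟨v, hv⟩ := exists_common_vertex_of_pairwise_inter_nonempty hT hCfin (fun x _ ↦ hconn x)
    (hclique.imp hadj)
  have hedge {x : α} (hvx : v ∈ (f x).verts) : ∃ n, (f x).Adj v n :=
    exists_adj_of_preconnected_of_edgeSet_nonempty (hconn x).preconnected (hnontrivial x) hvx
  have hCs : Cs ⊆ ⋃ n : T.neighborSet v, {x | (f x).Adj v n} := fun x hx ↦ by
    obtain ⟨n, hn⟩ := hedge (hv x hx)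
    exact Set.mem_iUnion.mpr ⟨⟨n, hn.adj_sub⟩, hn⟩
  obtain ⟨C, hCdisj, hCunion, hCncard, hCedge⟩ := exists_partition_fin_of_encard_eq_mul
    (hdeg v) (fun n ↦ hload s(v, n) n.2) hCs hCcard
  refine ⟨C, fun i j hij ↦ hCdisj hij, hCunion, hCncard, fun w hw ↦ ?_⟩
  have hvw : v ∉ (f w).verts := fun hvw ↦ by
    obtain ⟨n, hn⟩ := hedge hvw
    obtain ⟨i, hi⟩ := hCedge ⟨n, hn.adj_sub⟩
    have hwC : w ∈ Cs := hCunion ▸ Set.mem_iUnion.mpr ⟨i, hi ▸ hn⟩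
    exact Set.disjoint_left.mp hdisj hwC hw
  obtain ⟨n, hvn, hn⟩ := exists_adj_forall_preconnected_adj hT (hconn w) hvw
  obtain ⟨i, hi⟩ := hCedge ⟨n, hvn⟩
  refine ⟨i, fun x hwx ↦ ?_⟩
  have hxC : x ∈ Cs := by
    have hx : x ∈ Cs ∪ Is := hcover ▸ Set.mem_univ x
    exact hx.resolve_right fun hxI ↦ hindep w hw x hxI hwx
  exact hi ▸ hn (f x) (hconn x).preconnected (hv x hxC) (hadj x w hwx.symm)

/-- Let `G` be a split graph — `V(G)` partitioned into a clique `Cs = C(G)` and an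
independent set `Is = I(G)` — with `|C(G)| = 3k`, `k ≥ 1`, and let `(T, {f x}_{x ∈ V(G)})`
be a tree-representation of `G` (T a finite ternary tree, each `f x` a nontrivial subtree,
adjacent vertices of `G` getting subtrees sharing a vertex) in which every edge of `T`
belongs to at most `k` of the subtrees. Then `C(G)` can be partitioned into three subsets
`C 0, C 1, C 2`, each of size `k`, such that for each `w ∈ I(G)` the neighborhood
`N_G(w)` is contained in one of the three subsets. -/
theorem split_graph_tree_rep_partition {α V : Type} [Fintype α] [Fintype V]
    (G : SimpleGraph α)
    (Cs Is : Set α) (hdisj : Disjoint Cs Is) (hcover : Cs ∪ Is = Set.univ)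
    (hclique : G.IsClique Cs) (hindep : ∀ u ∈ Is, ∀ v ∈ Is, ¬ G.Adj u v)
    (k : ℕ) (hk : 1 ≤ k) (hCcard : Cs.ncard = 3 * k)
    (T : SimpleGraph V) (hT : T.IsTree)
    (hternary : ∀ v : V, (T.neighborSet v).ncard = 1 ∨ (T.neighborSet v).ncard = 3)
    (f : α → T.Subgraph)
    (hconn : ∀ x : α, (f x).Connected)
    (hnontrivial : ∀ x : α, (f x).edgeSet.Nonempty)
    (hadj : ∀ u v : α, G.Adj u v → ((f u).verts ∩ (f v).verts).Nonempty)
    (hload : ∀ e ∈ T.edgeSet, {x : α | e ∈ (f x).edgeSet}.ncard ≤ k) :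
    ∃ C : Fin 3 → Set α,
      (∀ i j : Fin 3, i ≠ j → Disjoint (C i) (C j)) ∧
      (⋃ i, C i) = Cs ∧
      (∀ i, (C i).ncard = k) ∧
      (∀ w ∈ Is, ∃ i : Fin 3, G.neighborSet w ⊆ C i) :=
  split_graph_tree_rep_partition_general G Cs Is hdisj hcover hclique hindep 3 k
    (by rw [← Cs.toFinite.cast_ncard_eq, hCcard]; rfl) T hT
    (fun v ↦ Set.encard_le_coe_iff_finite_ncard_le.mpr
      ⟨Set.toFinite _, by rcases hternary v with h | h <;> omega⟩)
    f hconn hnontrivial hadj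
    (fun e he ↦ Set.encard_le_coe_iff_finite_ncard_le.mpr ⟨Set.toFinite _, hload e he⟩)
end

section
/- Let G be a split graph with clique part C(G) of size 3k, k ≥ 1, and suppose C(G) can be partitioned into three subsets C_1, C_2, C_3, each of size k, such that for each vertex w in the independent part I(G), the neighborhood N_G(w) is contained in one of C_1, C_2, C_3. Then there exists a tree-representation (T, {T_x}_{x∈V(G)}) of G in which every edge of T belongs to at most k of the subtrees T_x. -/
/-!
The host tree has a centre from which one long path per part `C i` starts; a pendant edge, a
*tooth*, hangs at each interior vertex of these paths. A vertex of `⋃ i, C i` is represented by the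
centre together with the paths of all parts containing it, so any two of these subtrees meet in the
centre and an edge of path `i` lies only in the subtrees of the members of `C i`. A vertex `w`
outside the union has its neighbours in a single `C i`, and is represented by a tooth of path `i`
that is reserved for `w`: it meets the subtree of every member of `C i`, and its edge lies in no
other subtree.
-/

open SimpleGraph

section ParentGraph

variable {V β : Type*} [Preorder β] {p : V → V} {r : V → β} {o : V}

/-- The graph joining every vertex `v` to its parent `p v`. A root is encoded as a fixed point of
`p`, which contributes no edge. -/
def parentGraph (p : V → V) : SimpleGraph V :=
  SimpleGraph.fromRel fun v w => p v = w

theorem parentGraph_adj {v w : V} :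
    (parentGraph p).Adj v w ↔ v ≠ w ∧ (p v = w ∨ p w = v) :=
  SimpleGraph.fromRel_adj _ _ _

theorem parent_ne_self (hr : ∀ v, v ≠ o → r (p v) < r v) {v : V} (hv : v ≠ o) : p v ≠ v :=
  fun h => (hr v hv).ne (congrArg r h)

theorem parentGraph_adj_parent (hr : ∀ v, v ≠ o → r (p v) < r v) {v : V} (hv : v ≠ o) :
    (parentGraph p).Adj v (p v) :=
  parentGraph_adj.2 ⟨(parent_ne_self hr hv).symm, Or.inl rfl⟩

theorem parent_parent_ne_self (hr : ∀ v, v ≠ o → r (p v) < r v) (ho : p o = o) {v : V}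
    (hv : v ≠ o) : p (p v) ≠ v := by
  intro h
  have hpv : p v ≠ o := fun hpv => hv (by rw [← h, hpv, ho])
  have hlt : r v < r (p v) := by simpa only [h] using hr (p v) hpv
  exact lt_asymm hlt (hr v hv)

theorem connected_parentGraph_induce [WellFoundedLT β] (hr : ∀ v, v ≠ o → r (p v) < r v)
    {S : Set V} (ho : o ∈ S) (hS : ∀ v ∈ S, p v ∈ S) : ((parentGraph p).induce S).Connected := by
  have reachable_root : ∀ v (hv : v ∈ S),
      ((parentGraph p).induce S).Reachable ⟨v, hv⟩ ⟨o, ho⟩ := by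
    intro v
    induction v using (InvImage.wf r wellFounded_lt).induction with
    | _ v ih =>
      intro hv
      obtain rfl | hvo := eq_or_ne v o
      · rfl
      have hadj : ((parentGraph p).induce S).Adj ⟨v, hv⟩ ⟨p v, hS v hv⟩ :=
        parentGraph_adj_parent hr hvo
      exact hadj.reachable.trans (ih (p v) (hr v hvo) (hS v hv))
  exact (connected_iff_exists_forall_reachable _).2
    ⟨⟨o, ho⟩, fun v => (reachable_root v.1 v.2).symm⟩

theorem edgeSet_parentGraph (hr : ∀ v, v ≠ o → r (p v) < r v) (ho : p o = o) :
    (parentGraph p).edgeSet = (fun v => s(v, p v)) '' {o}ᶜ := by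
  refine Set.Subset.antisymm ?_ ?_
  · intro e
    induction e with
    | _ v w =>
      intro he
      obtain ⟨hne, rfl | rfl⟩ := parentGraph_adj.1 ((parentGraph p).mem_edgeSet.1 he)
      · exact ⟨v, fun hv => hne (by rw [hv, ho]), rfl⟩
      · exact ⟨w, fun hw => hne (by rw [hw, ho]), Sym2.eq_swap⟩
  · rintro _ ⟨v, hv, rfl⟩
    exact parentGraph_adj_parent hr hv

theorem injOn_mk_parent (hr : ∀ v, v ≠ o → r (p v) < r v) (ho : p o = o) :
    Set.InjOn (fun v => s(v, p v)) {o}ᶜ := by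
  intro v hv w _ h
  obtain ⟨hvw, _⟩ | ⟨hvw, hwv⟩ := Sym2.eq_iff.1 h
  · exact hvw
  · exact absurd (by rw [hwv, ← hvw]) (parent_parent_ne_self hr ho hv)

theorem isTree_parentGraph [Finite V] [WellFoundedLT β] (hr : ∀ v, v ≠ o → r (p v) < r v)
    (ho : p o = o) : (parentGraph p).IsTree := by
  refine isTree_iff_connected_and_card.2 ⟨?_, ?_⟩
  · exact (induceUnivIso _).connected_iff.1
      (connected_parentGraph_induce hr (Set.mem_univ o) fun _ _ => Set.mem_univ _)
  · rw [Nat.card_coe_set_eq, edgeSet_parentGraph hr ho, (injOn_mk_parent hr ho).ncard_image,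
      ← Set.ncard_add_ncard_compl {o}, Set.ncard_singleton, add_comm]

theorem neighborSet_parentGraph_root (ho : p o = o) :
    (parentGraph p).neighborSet o = p ⁻¹' {o} \ {o} := by
  ext w
  simp only [mem_neighborSet, parentGraph_adj, ho, Set.mem_sdiff, Set.mem_preimage,
    Set.mem_singleton_iff]
  grind

theorem neighborSet_parentGraph (hr : ∀ v, v ≠ o → r (p v) < r v) {v : V} (hv : v ≠ o) :
    (parentGraph p).neighborSet v = insert (p v) (p ⁻¹' {v}) := by
  ext w
  have hne : p v ≠ v := parent_ne_self hr hv
  simp only [mem_neighborSet, parentGraph_adj, Set.mem_insert_iff, Set.mem_preimage,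
    Set.mem_singleton_iff]
  grind

theorem ncard_neighborSet_parentGraph (hr : ∀ v, v ≠ o → r (p v) < r v) (ho : p o = o)
    {v : V} (hv : v ≠ o) (hfin : (p ⁻¹' {v}).Finite) :
    ((parentGraph p).neighborSet v).ncard = (p ⁻¹' {v}).ncard + 1 := by
  have hnotMem : p v ∉ p ⁻¹' {v} := parent_parent_ne_self hr ho hv
  rw [neighborSet_parentGraph hr hv, Set.ncard_insert_of_notMem hnotMem hfin]

end ParentGraph

/-- Vertices of a spider of combs: a root, for every `i : ι` a path `spine i 0, …, spine i n`
starting next to the root, and a pendant vertex `tooth i m` at each `spine i m` with `m < n`. -/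
inductive CombVertex (ι : Type*) (n : ℕ)
  | root
  | spine (i : ι) (m : Fin (n + 1))
  | tooth (i : ι) (m : Fin n)
  deriving Fintype

namespace CombVertex

variable {ι : Type*} {n : ℕ}

/-- The neighbour of a vertex on its path to the root; the root is its own parent. -/
def parent : CombVertex ι n → CombVertex ι n
  | root => root
  | spine i m => Fin.cases root (fun j => spine i j.castSucc) m
  | tooth i m => spine i m.castSucc

/-- The distance of a vertex from the root. -/
def depth : CombVertex ι n → ℕ
  | root => 0
  | spine _ m => m + 1
  | tooth _ m => m + 2

theorem depth_parent_lt : ∀ v : CombVertex ι n, v ≠ root → depth (parent v) < depth v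
  | root, h => absurd rfl h
  | spine _ m, _ => by cases m using Fin.cases <;> simp [parent, depth]
  | tooth _ _, _ => by simp [parent, depth]

theorem parent_preimage_root :
    parent ⁻¹' {(root : CombVertex ι n)} \ {root} = Set.range fun i => spine i 0 := by
  ext (_ | ⟨i, m⟩ | ⟨i, m⟩)
  · simp
  · cases m using Fin.cases <;> simp [parent, Fin.succ_ne_zero, eq_comm]
  · simp [parent]

theorem parent_preimage_spine_castSucc (i : ι) (m : Fin n) :
    parent ⁻¹' {spine i m.castSucc} = {tooth i m, spine i m.succ} := by
  ext (_ | ⟨j, l⟩ | ⟨j, l⟩)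
  · simp [parent]
  · cases l using Fin.cases <;> simp [parent, (Fin.succ_ne_zero _).symm]
  · simp [parent]

theorem parent_preimage_spine_last (i : ι) :
    parent ⁻¹' {spine i (Fin.last n)} = ∅ := by
  ext (_ | ⟨j, l⟩ | ⟨j, l⟩)
  · simp [parent]
  · cases l using Fin.cases <;> simp [parent, Fin.castSucc_ne_last]
  · simp [parent, Fin.castSucc_ne_last]

theorem parent_preimage_tooth (i : ι) (m : Fin n) : parent ⁻¹' {tooth i m} = ∅ := by
  ext (_ | ⟨j, l⟩ | ⟨j, l⟩)
  · simp [parent]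
  · cases l using Fin.cases <;> simp [parent]
  · simp [parent]

theorem finite_and_ncard_parent_preimage {v : CombVertex ι n} (hv : v ≠ root) :
    (parent ⁻¹' {v}).Finite ∧ ((parent ⁻¹' {v}).ncard = 0 ∨ (parent ⁻¹' {v}).ncard = 2) := by
  cases v with
  | root => exact absurd rfl hv
  | spine i m =>
    cases m using Fin.lastCases with
    | last => simp [parent_preimage_spine_last]
    | cast m => simp [parent_preimage_spine_castSucc]
  | tooth i m => simp [parent_preimage_tooth]

end CombVertex

open CombVertex

/-- The spider of combs on `CombVertex ι n`, the host tree of the representation. -/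
abbrev combGraph (ι : Type*) (n : ℕ) : SimpleGraph (CombVertex ι n) :=
  parentGraph parent

section CombGraph

variable {ι : Type*} {n : ℕ}

theorem ncard_neighborSet_combGraph_root :
    ((combGraph ι n).neighborSet root).ncard = Nat.card ι := by
  have hinj : Function.Injective fun i : ι => (spine i 0 : CombVertex ι n) :=
    fun i j h => (spine.inj h).1
  rw [neighborSet_parentGraph_root rfl, parent_preimage_root, ← Set.image_univ,
    Set.ncard_image_of_injective _ hinj, Set.ncard_univ]

theorem ncard_neighborSet_combGraph {v : CombVertex ι n} (hv : v ≠ root) :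
    ((combGraph ι n).neighborSet v).ncard = 1 ∨ ((combGraph ι n).neighborSet v).ncard = 3 := by
  obtain ⟨hfin, hcard⟩ := finite_and_ncard_parent_preimage hv
  rw [ncard_neighborSet_parentGraph depth_parent_lt rfl hv hfin]
  omega

/-- The subtree of `combGraph ι n` formed by the root and the spines indexed by `J`. -/
def spineSubgraph (n : ℕ) (J : Set ι) : (combGraph ι n).Subgraph :=
  (⊤ : (combGraph ι n).Subgraph).induce
    (insert root {v | ∃ i ∈ J, ∃ m, v = spine i m})

theorem root_mem_verts_spineSubgraph (J : Set ι) : root ∈ (spineSubgraph n J).verts :=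
  Set.mem_insert _ _

theorem spine_mem_verts_spineSubgraph {J : Set ι} {i : ι} {m : Fin (n + 1)} :
    spine i m ∈ (spineSubgraph n J).verts ↔ i ∈ J := by
  simp [spineSubgraph]

theorem tooth_notMem_verts_spineSubgraph (J : Set ι) (i : ι) (m : Fin n) :
    tooth i m ∉ (spineSubgraph n J).verts := by
  simp [spineSubgraph]

theorem parent_mem_verts_spineSubgraph {J : Set ι} {v : CombVertex ι n}
    (hv : v ∈ (spineSubgraph n J).verts) : parent v ∈ (spineSubgraph n J).verts := by
  cases v with
  | root => exact hv
  | spine i m =>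
    cases m using Fin.cases with
    | zero => exact root_mem_verts_spineSubgraph J
    | succ m => exact spine_mem_verts_spineSubgraph.2 (spine_mem_verts_spineSubgraph.1 hv)
  | tooth i m => exact absurd hv (tooth_notMem_verts_spineSubgraph J i m)

theorem connected_spineSubgraph (n : ℕ) (J : Set ι) : (spineSubgraph n J).Connected :=
  connected_induce_iff.1 <| connected_parentGraph_induce depth_parent_lt
    (root_mem_verts_spineSubgraph J) fun _ => parent_mem_verts_spineSubgraph

theorem edgeSet_spineSubgraph_nonempty (n : ℕ) {J : Set ι} (hJ : J.Nonempty) :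
    (spineSubgraph n J).edgeSet.Nonempty := by
  obtain ⟨i, hi⟩ := hJ
  exact ⟨s(spine i 0, root), spine_mem_verts_spineSubgraph.2 hi, root_mem_verts_spineSubgraph J,
    parentGraph_adj_parent depth_parent_lt (v := spine i 0) (by simp)⟩

theorem combGraph_adj_tooth (i : ι) (m : Fin n) :
    (combGraph ι n).Adj (tooth i m) (spine i m.castSucc) :=
  parentGraph_adj_parent depth_parent_lt (v := tooth i m) (by simp)

theorem mk_parent_mem_edgeSet_tooth {i : ι} {m : Fin n} {v : CombVertex ι n} (hv : v ≠ root)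
    (h : s(v, parent v) ∈ ((combGraph ι n).subgraphOfAdj (combGraph_adj_tooth i m)).edgeSet) :
    v = tooth i m := by
  rw [edgeSet_subgraphOfAdj] at h
  exact injOn_mk_parent depth_parent_lt rfl hv (by simp) h

end CombGraph

section Representation

variable {α ι : Type*} {n : ℕ} {C : ι → Set α} {a : α → ι} {φ : α → Fin n}

open Classical in
/-- The subtree of `combGraph ι n` representing `x`: the root and the spines of all parts containing
`x` if there are any, and otherwise the `φ x`-th tooth of the spine `a x`. -/
noncomputable def combSubtree (C : ι → Set α) (a : α → ι) (φ : α → Fin n) (x : α) :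
    (combGraph ι n).Subgraph :=
  if x ∈ ⋃ i, C i then spineSubgraph n {i | x ∈ C i}
  else (combGraph ι n).subgraphOfAdj (combGraph_adj_tooth (a x) (φ x))

theorem combSubtree_of_mem {x : α} (hx : x ∈ ⋃ i, C i) :
    combSubtree C a φ x = spineSubgraph n {i | x ∈ C i} :=
  if_pos hx

theorem combSubtree_of_notMem {x : α} (hx : x ∉ ⋃ i, C i) :
    combSubtree C a φ x =
      (combGraph ι n).subgraphOfAdj (combGraph_adj_tooth (a x) (φ x)) :=
  if_neg hx

theorem connected_combSubtree (C : ι → Set α) (a : α → ι) (φ : α → Fin n) (x : α) :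
    (combSubtree C a φ x).Connected := by
  by_cases hx : x ∈ ⋃ i, C i
  · rw [combSubtree_of_mem hx]
    exact connected_spineSubgraph n _
  · rw [combSubtree_of_notMem hx]
    exact Subgraph.subgraphOfAdj_connected _

theorem edgeSet_combSubtree_nonempty (C : ι → Set α) (a : α → ι) (φ : α → Fin n) (x : α) :
    (combSubtree C a φ x).edgeSet.Nonempty := by
  by_cases hx : x ∈ ⋃ i, C i
  · rw [combSubtree_of_mem hx]
    exact edgeSet_spineSubgraph_nonempty n (Set.mem_iUnion.1 hx)
  · rw [combSubtree_of_notMem hx, edgeSet_subgraphOfAdj]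
    exact Set.singleton_nonempty _

theorem combSubtree_verts_inter_nonempty_of_notMem {u v : α} (hu : u ∉ ⋃ i, C i)
    (hv : v ∈ C (a u)) :
    ((combSubtree C a φ u).verts ∩ (combSubtree C a φ v).verts).Nonempty := by
  rw [combSubtree_of_notMem hu, combSubtree_of_mem (Set.mem_iUnion_of_mem _ hv)]
  exact ⟨spine (a u) (φ u).castSucc, by simp, spine_mem_verts_spineSubgraph.2 hv⟩

theorem combSubtree_verts_inter_nonempty {G : SimpleGraph α}
    (ha : ∀ w ∉ ⋃ i, C i, G.neighborSet w ⊆ C (a w)) {u v : α} (huv : G.Adj u v) :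
    ((combSubtree C a φ u).verts ∩ (combSubtree C a φ v).verts).Nonempty := by
  by_cases hu : u ∈ ⋃ i, C i
  · by_cases hv : v ∈ ⋃ i, C i
    · rw [combSubtree_of_mem hu, combSubtree_of_mem hv]
      exact ⟨root, root_mem_verts_spineSubgraph _, root_mem_verts_spineSubgraph _⟩
    · rw [Set.inter_comm]
      exact combSubtree_verts_inter_nonempty_of_notMem hv (ha v hv huv.symm)
  · exact combSubtree_verts_inter_nonempty_of_notMem hu (ha u hu huv)

theorem mem_of_spine_edge_mem_combSubtree {i : ι} {m : Fin (n + 1)} {x : α}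
    (h : s(spine i m, parent (spine i m)) ∈ (combSubtree C a φ x).edgeSet) : x ∈ C i := by
  by_cases hx : x ∈ ⋃ i, C i
  · rw [combSubtree_of_mem hx] at h
    have hi : i ∈ {i | x ∈ C i} := spine_mem_verts_spineSubgraph.1 (Subgraph.Adj.fst_mem h)
    exact hi
  · rw [combSubtree_of_notMem hx] at h
    cases mk_parent_mem_edgeSet_tooth (by simp) h

theorem eq_of_tooth_edge_mem_combSubtree {i : ι} {m : Fin n} {x : α}
    (h : s(tooth i m, parent (tooth i m)) ∈ (combSubtree C a φ x).edgeSet) : φ x = m := by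
  by_cases hx : x ∈ ⋃ i, C i
  · rw [combSubtree_of_mem hx] at h
    exact absurd (Subgraph.Adj.fst_mem h) (tooth_notMem_verts_spineSubgraph _ i m)
  · rw [combSubtree_of_notMem hx] at h
    exact (tooth.inj (mk_parent_mem_edgeSet_tooth (by simp) h)).2.symm

theorem ncard_edge_mem_combSubtree_le [Finite α] {k : ℕ} (hk : 1 ≤ k)
    (hC : ∀ i, (C i).ncard ≤ k) (hφ : Function.Injective φ) {e : Sym2 (CombVertex ι n)}
    (he : e ∈ (combGraph ι n).edgeSet) :
    {x | e ∈ (combSubtree C a φ x).edgeSet}.ncard ≤ k := by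
  rw [edgeSet_parentGraph depth_parent_lt rfl] at he
  obtain ⟨v, hv, rfl⟩ := he
  cases v with
  | root => exact absurd rfl hv
  | spine i m =>
    exact (Set.ncard_le_ncard fun x => mem_of_spine_edge_mem_combSubtree).trans (hC i)
  | tooth i m =>
    refine le_trans ((Set.ncard_le_one).2 fun x hx y hy => hφ ?_) hk
    rw [eq_of_tooth_edge_mem_combSubtree hx, eq_of_tooth_edge_mem_combSubtree hy]

end Representation

theorem split_graph_partition_tree_rep_general {α : Type*} [Finite α] (G : SimpleGraph α)
    (k : ℕ) (hk : 1 ≤ k) (C : Fin 3 → Set α) (hCsize : ∀ i, (C i).ncard ≤ k)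
    (hnbhd : ∀ w ∉ ⋃ i, C i, ∃ i, G.neighborSet w ⊆ C i) :
    ∃ (V : Type) (_ : Fintype V) (T : SimpleGraph V), T.IsTree ∧
      (∀ v : V, (T.neighborSet v).ncard = 1 ∨ (T.neighborSet v).ncard = 3) ∧
      ∃ f : α → T.Subgraph,
        (∀ x : α, (f x).Connected) ∧
        (∀ x : α, (f x).edgeSet.Nonempty) ∧
        (∀ u v : α, G.Adj u v → ((f u).verts ∩ (f v).verts).Nonempty) ∧
        (∀ e ∈ T.edgeSet, {x : α | e ∈ (f x).edgeSet}.ncard ≤ k) := by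
  choose! a ha using hnbhd
  let φ : α ≃ Fin (Nat.card α) := Finite.equivFin α
  refine ⟨CombVertex (Fin 3) (Nat.card α), inferInstance, combGraph _ _,
    isTree_parentGraph depth_parent_lt rfl, fun v => ?_, combSubtree C a φ,
    connected_combSubtree C a φ, edgeSet_combSubtree_nonempty C a φ,
    fun u v => combSubtree_verts_inter_nonempty ha,
    fun e => ncard_edge_mem_combSubtree_le hk hCsize φ.injective⟩
  obtain rfl | hv := eq_or_ne v root
  · exact Or.inr (by rw [ncard_neighborSet_combGraph_root, Nat.card_fin])
  · exact ncard_neighborSet_combGraph hv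

/-- Let `G` be a split graph — `V(G)` partitioned into a clique `Cs = C(G)` and an
independent set `Is = I(G)` — with `|C(G)| = 3k`, `k ≥ 1`, and suppose `C(G)` can be
partitioned into three subsets `C 0, C 1, C 2`, each of size `k`, such that for each
`w ∈ I(G)` the neighborhood `N_G(w)` is contained in one of the three subsets. Then there
is a tree-representation `(T, {f x}_{x ∈ V(G)})` of `G` (T a finite ternary tree, each
`f x` a nontrivial subtree, adjacent vertices of `G` getting subtrees sharing a vertex)
in which every edge of `T` belongs to at most `k` of the subtrees. -/
theorem split_graph_partition_tree_rep {α : Type} [Fintype α]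
    (G : SimpleGraph α)
    (Cs Is : Set α) (hdisj : Disjoint Cs Is) (hcover : Cs ∪ Is = Set.univ)
    (hclique : G.IsClique Cs) (hindep : ∀ u ∈ Is, ∀ v ∈ Is, ¬ G.Adj u v)
    (k : ℕ) (hk : 1 ≤ k) (hCcard : Cs.ncard = 3 * k)
    (C : Fin 3 → Set α)
    (hCdisj : ∀ i j : Fin 3, i ≠ j → Disjoint (C i) (C j))
    (hCunion : (⋃ i, C i) = Cs)
    (hCsize : ∀ i, (C i).ncard = k)
    (hnbhd : ∀ w ∈ Is, ∃ i : Fin 3, G.neighborSet w ⊆ C i) :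
    ∃ (V : Type) (_ : Fintype V) (T : SimpleGraph V), T.IsTree ∧
      (∀ v : V, (T.neighborSet v).ncard = 1 ∨ (T.neighborSet v).ncard = 3) ∧
      ∃ f : α → T.Subgraph,
        (∀ x : α, (f x).Connected) ∧
        (∀ x : α, (f x).edgeSet.Nonempty) ∧
        (∀ u v : α, G.Adj u v → ((f u).verts ∩ (f v).verts).Nonempty) ∧
        (∀ e ∈ T.edgeSet, {x : α | e ∈ (f x).edgeSet}.ncard ≤ k) := by
  refine split_graph_partition_tree_rep_general G k hk C (fun i => (hCsize i).le) fun w hw => ?_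
  exact hnbhd w ((hcover.ge (Set.mem_univ w)).resolve_left (hCunion ▸ hw))
end

section
/- Let G be a split graph with clique part C = C(G) of size 3k, k ≥ 1, let (T, {T_x}_{x∈V(G)}) be a tree-representation of G in which every edge of T belongs to at most k subtrees, and let v_0 be a vertex of T lying in T_x for every x ∈ C. Then v_0 has degree 3 in T; moreover, if e_1, e_2, e_3 are the three edges of T incident with v_0, then each e_i belongs to exactly k of the subtrees T_x with x ∈ C, and each subtree T_x with x ∈ C contains exactly one of the edges e_1, e_2, e_3. -/
/-!
Count the pairs `(x, e)` where `x` is in the clique and `e` is an edge of the subtree of `x`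
incident with `v₀`. A connected subtree with an edge that contains `v₀` uses at least one edge at
`v₀`, so there are at least `3 * k` pairs; each of the at most three edges at `v₀` lies in at most
`k` subtrees, so there are at most `3 * k`. Hence all these bounds are attained.
-/

open Finset in
theorem card_bipartiteAbove_eq_and_card_bipartiteBelow_eq_of_card_mul_le {α β : Type*}
    (r : α → β → Prop) [∀ a b, Decidable (r a b)] {s : Finset α} {t : Finset β} {m n : ℕ}
    (hm : ∀ a ∈ s, m ≤ #(t.bipartiteAbove r a)) (hn : ∀ b ∈ t, #(s.bipartiteBelow r b) ≤ n)
    (hcard : #t * n ≤ #s * m) :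
    (∀ a ∈ s, #(t.bipartiteAbove r a) = m) ∧ ∀ b ∈ t, #(s.bipartiteBelow r b) = n := by
  have hlower : ∑ _a ∈ s, m ≤ ∑ a ∈ s, #(t.bipartiteAbove r a) := sum_le_sum hm
  have hupper : ∑ b ∈ t, #(s.bipartiteBelow r b) ≤ ∑ _b ∈ t, n := sum_le_sum hn
  have hcard' : ∑ _b ∈ t, n ≤ ∑ _a ∈ s, m := by simpa only [sum_const, smul_eq_mul] using hcard
  have hcount : ∑ a ∈ s, #(t.bipartiteAbove r a) = ∑ b ∈ t, #(s.bipartiteBelow r b) :=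
    sum_card_bipartiteAbove_eq_sum_card_bipartiteBelow r
  have hlower_eq := (sum_eq_sum_iff_of_le hm).1 (by omega)
  have hupper_eq := (sum_eq_sum_iff_of_le hn).1 (by omega)
  exact ⟨fun a ha ↦ (hlower_eq a ha).symm, hupper_eq⟩

section DoubleCounting

variable {α β : Type*} {r : α → β → Prop} {s : Set α} {t : Set β} {k : ℕ}

theorem ncard_le_ncard_mul_of_forall_exists (hs : s.Finite) (ht : t.Finite)
    (hr : ∀ a ∈ s, ∃ b ∈ t, r a b) (hk : ∀ b ∈ t, {a | a ∈ s ∧ r a b}.ncard ≤ k) :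
    s.ncard ≤ t.ncard * k := by
  classical
  lift s to Finset α using hs
  lift t to Finset β using ht
  simp only [Finset.mem_coe, ← Finset.coe_bipartiteBelow, Set.ncard_coe_finset] at hr hk ⊢
  have habove : ∀ a ∈ s, 1 ≤ (t.bipartiteAbove r a).card := fun a ha ↦
    Finset.one_le_card.2 ((hr a ha).imp fun _ hb ↦ (Finset.mem_bipartiteAbove r).2 hb)
  simpa only [mul_one] using Finset.card_mul_le_card_mul r habove hk

theorem ncard_eq_and_existsUnique_of_ncard_mul_le (hs : s.Finite) (ht : t.Finite)
    (hr : ∀ a ∈ s, ∃ b ∈ t, r a b) (hk : ∀ b ∈ t, {a | a ∈ s ∧ r a b}.ncard ≤ k)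
    (hcard : t.ncard * k ≤ s.ncard) :
    (∀ b ∈ t, {a | a ∈ s ∧ r a b}.ncard = k) ∧ ∀ a ∈ s, ∃! b, b ∈ t ∧ r a b := by
  classical
  lift s to Finset α using hs
  lift t to Finset β using ht
  simp only [Finset.mem_coe, ← Finset.coe_bipartiteBelow, Set.ncard_coe_finset] at hr hk hcard ⊢
  have habove : ∀ a ∈ s, 1 ≤ (t.bipartiteAbove r a).card := fun a ha ↦
    Finset.one_le_card.2 ((hr a ha).imp fun _ hb ↦ (Finset.mem_bipartiteAbove r).2 hb)
  obtain ⟨habove_eq, hbelow_eq⟩ :=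
    card_bipartiteAbove_eq_and_card_bipartiteBelow_eq_of_card_mul_le r habove hk
      (by simpa only [mul_one] using hcard)
  refine ⟨hbelow_eq, fun a ha ↦ ?_⟩
  simpa only [Finset.card_eq_one, Finset.singleton_iff_unique_mem, Finset.mem_bipartiteAbove]
    using habove_eq a ha

end DoubleCounting

section Incidence

variable {V : Type*} {T : SimpleGraph V} {v : V}

theorem ncard_incidenceSet : (T.incidenceSet v).ncard = (T.neighborSet v).ncard := by
  classical exact Set.ncard_congr' (T.incidenceSetEquivNeighborSet v)

theorem finite_incidenceSet (h : (T.neighborSet v).Finite) : (T.incidenceSet v).Finite := by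
  classical
  have := h.to_subtype
  exact Set.finite_coe_iff.1 (Finite.of_equiv _ (T.incidenceSetEquivNeighborSet v).symm)

theorem nonempty_incidenceSet_of_preconnected {H : T.Subgraph} (hH : H.Preconnected)
    (hedge : H.edgeSet.Nonempty) (hv : v ∈ H.verts) : (H.incidenceSet v).Nonempty := by
  obtain ⟨⟨a, b⟩, hab : H.Adj a b⟩ := hedge
  have : Nontrivial H.verts :=
    ⟨⟨a, hab.fst_mem⟩, ⟨b, hab.snd_mem⟩, fun h ↦ hab.ne (congrArg Subtype.val h)⟩
  obtain ⟨w, hvw⟩ := hH.exists_adj_of_nontrivial ⟨v, hv⟩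
  exact ⟨s(v, w), hvw, Sym2.mem_mk_left v w⟩

end Incidence

theorem split_graph_center_vertex_general {α V : Type*} {T : SimpleGraph V} {f : α → T.Subgraph}
    {C : Set α} {v₀ : V} {d k : ℕ} (hk : 1 ≤ k) (hC : C.Finite) (hCcard : d * k ≤ C.ncard)
    (hfin : (T.neighborSet v₀).Finite) (hdeg : (T.neighborSet v₀).ncard ≤ d)
    (hconn : ∀ x ∈ C, (f x).Preconnected) (hnontrivial : ∀ x ∈ C, (f x).edgeSet.Nonempty)
    (hload : ∀ e ∈ T.incidenceSet v₀, {x | x ∈ C ∧ e ∈ (f x).edgeSet}.ncard ≤ k)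
    (hv₀ : ∀ x ∈ C, v₀ ∈ (f x).verts) :
    (T.neighborSet v₀).ncard = d ∧
    (∀ e ∈ T.incidenceSet v₀, {x | x ∈ C ∧ e ∈ (f x).edgeSet}.ncard = k) ∧
    (∀ x ∈ C, ∃! e : Sym2 V, e ∈ T.incidenceSet v₀ ∧ e ∈ (f x).edgeSet) := by
  have hinc : (T.incidenceSet v₀).Finite := finite_incidenceSet hfin
  have hmeet : ∀ x ∈ C, ∃ e ∈ T.incidenceSet v₀, e ∈ (f x).edgeSet := fun x hx ↦
    have ⟨e, he⟩ :=
      nonempty_incidenceSet_of_preconnected (hconn x hx) (hnontrivial x hx) (hv₀ x hx)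
    ⟨e, (f x).incidenceSet_subset_incidenceSet v₀ he, he.1⟩
  have hle : d * k ≤ (T.neighborSet v₀).ncard * k := by
    rw [← ncard_incidenceSet]
    exact hCcard.trans (ncard_le_ncard_mul_of_forall_exists hC hinc hmeet hload)
  refine ⟨hdeg.antisymm (Nat.le_of_mul_le_mul_right hle hk),
    ncard_eq_and_existsUnique_of_ncard_mul_le hC hinc hmeet hload ?_⟩
  rw [ncard_incidenceSet]
  exact (Nat.mul_le_mul_right k hdeg).trans hCcard

/-- Let `G` be a split graph — `V(G)` partitioned into a clique `Cs = C(G)` and an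
independent set `Is = I(G)` — with `|C(G)| = 3k`, `k ≥ 1`, let `(T, {f x}_{x ∈ V(G)})` be
a tree-representation of `G` in which every edge of `T` belongs to at most `k` subtrees,
and let `v₀` be a vertex of `T` lying in `f x` for every `x ∈ C(G)`. Then `v₀` has
degree 3 in `T`; moreover each of the three edges of `T` incident with `v₀` belongs to
exactly `k` of the subtrees `f x` with `x ∈ C(G)`, and each subtree `f x` with
`x ∈ C(G)` contains exactly one of these incident edges. -/
theorem split_graph_center_vertex {α V : Type} [Fintype α] [Fintype V]
    (G : SimpleGraph α)
    (Cs Is : Set α) (hdisj : Disjoint Cs Is) (hcover : Cs ∪ Is = Set.univ)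
    (hclique : G.IsClique Cs) (hindep : ∀ u ∈ Is, ∀ v ∈ Is, ¬ G.Adj u v)
    (k : ℕ) (hk : 1 ≤ k) (hCcard : Cs.ncard = 3 * k)
    (T : SimpleGraph V) (hT : T.IsTree)
    (hternary : ∀ v : V, (T.neighborSet v).ncard = 1 ∨ (T.neighborSet v).ncard = 3)
    (f : α → T.Subgraph)
    (hconn : ∀ x : α, (f x).Connected)
    (hnontrivial : ∀ x : α, (f x).edgeSet.Nonempty)
    (hadj : ∀ u v : α, G.Adj u v → ((f u).verts ∩ (f v).verts).Nonempty)
    (hload : ∀ e ∈ T.edgeSet, {x : α | e ∈ (f x).edgeSet}.ncard ≤ k)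
    (v₀ : V) (hv₀ : ∀ x ∈ Cs, v₀ ∈ (f x).verts) :
    (T.neighborSet v₀).ncard = 3 ∧
    (∀ e ∈ T.incidenceSet v₀, {x : α | x ∈ Cs ∧ e ∈ (f x).edgeSet}.ncard = k) ∧
    (∀ x ∈ Cs, ∃! e : Sym2 V, e ∈ T.incidenceSet v₀ ∧ e ∈ (f x).edgeSet) := by
  exact split_graph_center_vertex_general hk Cs.toFinite hCcard.ge (Set.toFinite _)
    (by rcases hternary v₀ with h | h <;> omega) (fun x _ ↦ (hconn x).preconnected)
    (fun x _ ↦ hnontrivial x)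
    (fun e he ↦ (Set.ncard_le_ncard (fun _ hx ↦ hx.2) (Set.toFinite _)).trans (hload e he.1)) hv₀
end
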